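/- Let f(x) = x² + bx + c with b, c ∈ ℤ and non-square discriminant D = b² - 4c. The set of squarefree integers n with exactly k prime factors, all coprime to 2D, such that f has exactly 2^k roots modulo n, has density 1/2^k among squarefree integers n ≤ x with k prime factors, as x → ∞. -/

import Mathlib

section
open MeasureTheory Filter Topology FourierTransform ContinuousLinearMap
open scoped Convolution ContDiff

namespace Sub14

lemma kernel_base : ∃ (K : ℝ → ℂ) (g : ℝ → ℝ), Continuous K ∧ HasCompactSupport K ∧
    (∀ v, 𝓕 K v = (g v : ℂ)) ∧ (∀ v, 0 ≤ g v) ∧ Integrable g ∧ 0 < ∫ v, g v := by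
  classical
  let b : ContDiffBump (0 : ℝ) := ⟨1, 2, by norm_num, by norm_num⟩
  let φ : ℝ → ℂ := fun x => (b x : ℂ)
  have hφc : Continuous φ := Complex.continuous_ofReal.comp b.continuous
  have hφs : HasCompactSupport φ := b.hasCompactSupport.comp_left (g := fun x : ℝ => (x : ℂ)) (by simp)
  have hφd : ContDiff ℝ ∞ φ := by
    have h1 : ContDiff ℝ ∞ (fun x => b x) := b.contDiff
    exact Complex.ofRealCLM.contDiff.comp h1
  have hφi : Integrable φ := hφc.integrable_of_hasCompactSupport hφs
  have hφe : ∀ x, φ (-x) = φ x := by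
    intro x
    simp only [φ, b.neg]
  let S : SchwartzMap ℝ ℂ := hφs.toSchwartzMap hφd
  have hSφ : (S : ℝ → ℂ) = φ := by ext; rfl
  have hF : ∀ v, 𝓕 φ v = (𝓕 S) v := by
    intro v; rw [SchwartzMap.fourier_coe, hSφ]
  have hreal : ∀ v, (starRingEnd ℂ) (𝓕 φ v) = 𝓕 φ v := by
    intro v
    rw [Real.fourier_real_eq, ← integral_conj, ← integral_neg_eq_self]
    congr 1
    ext x
    simp only [Circle.smul_def, smul_eq_mul, map_mul, hφe]
    congr 1
    · rw [← Circle.coe_inv_eq_conj, ← AddChar.map_neg_eq_inv]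
      congr 2; ring
    · simp [φ]
  let r : ℝ → ℝ := fun v => (𝓕 φ v).re
  have hr : ∀ v, 𝓕 φ v = (r v : ℂ) := fun v => (Complex.conj_eq_iff_re.1 (hreal v)).symm
  have hrc : Continuous r := by
    have : r = fun v => ((𝓕 S) v).re := by ext v; simp only [r, hF]
    rw [this]
    exact Complex.continuous_re.comp (𝓕 S).continuous
  have hgi : Integrable (fun v => r v ^ 2) := by
    have h1 : Integrable (fun v => (𝓕 S) v * (𝓕 S) v) := by
      refine ((𝓕 S).integrable).mul_bdd (c := (SchwartzMap.seminorm ℝ 0 0) (𝓕 S)) ((𝓕 S).continuous.aestronglyMeasurable) ?_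
      exact Eventually.of_forall fun v => SchwartzMap.norm_le_seminorm ℝ _ v
    have h2 := h1.re
    refine h2.congr (Eventually.of_forall fun v => ?_)
    simp only [← hF, hr]
    simp [pow_two]
  refine ⟨φ ⋆[mul ℂ ℂ] φ, fun v => r v ^ 2, ?_, ?_, ?_, fun v => sq_nonneg _, hgi, ?_⟩
  · exact hφs.continuous_convolution_right _ hφi.locallyIntegrable hφc
  · exact HasCompactSupport.convolution _ hφs hφs
  · intro v
    rw [Real.fourier_mul_convolution_eq hφi hφi, hr]
    push_cast; ring
  · refine (integral_pos_iff_support_of_nonneg (fun v => sq_nonneg _) hgi).2 ?_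
    have hopen : IsOpen (Function.support fun v => r v ^ 2) := by
      exact (hrc.pow 2).isOpen_support
    refine hopen.measure_pos _ ⟨0, ?_⟩
    simp only [Function.mem_support]
    have : r 0 = ∫ x, b x := by
      have h0 : 𝓕 φ 0 = ∫ x, φ x := by
        rw [Real.fourier_real_eq]; simp
      simp only [r, h0, φ]
      rw [integral_complex_ofReal]; simp
    rw [this]
    exact pow_ne_zero _ b.integral_pos.ne'

lemma kernel (s η : ℝ) (hs : 0 < s) (hη : 0 < η) : ∃ (K : ℝ → ℂ) (g : ℝ → ℝ),
    Continuous K ∧ HasCompactSupport K ∧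
    (∀ v, 𝓕 K v = (g v : ℂ)) ∧ (∀ v, 0 ≤ g v) ∧ Integrable g ∧ ∫ v, g v = 1 ∧
    1 - η ≤ ∫ v in Set.Icc (-s) s, g v := by
  obtain ⟨K, g, hK, hKs, hF, hg0, hgi, hI⟩ := kernel_base
  set I := ∫ v, g v with hIdef
  have hlim : Tendsto (fun l : ℝ => ∫ v in Set.Icc (-(l * s)) (l * s), g v) atTop (𝓝 I) := by
    have h := (aecover_Icc (μ := volume) (l := atTop) (a := fun l : ℝ => -(l * s)) (b := fun l => l * s)
      (tendsto_neg_atTop_atBot.comp (tendsto_id.atTop_mul_const hs))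
      (tendsto_id.atTop_mul_const hs)).integral_tendsto_of_countably_generated hgi
    exact h
  obtain ⟨l, hl, hl0⟩ := ((hlim.eventually (lt_mem_nhds (show (1 - η) * I < I by nlinarith))).and
    (eventually_gt_atTop 0)).exists
  refine ⟨fun u => (I : ℂ)⁻¹ * K (l⁻¹ * u), fun v => I⁻¹ * (l * g (l * v)), ?_, ?_, ?_, ?_, ?_, ?_, ?_⟩
  · fun_prop
  · have h1 : HasCompactSupport (fun u : ℝ => K (l⁻¹ * u)) :=
      hKs.comp_homeomorph (Homeomorph.mulLeft₀ l⁻¹ (inv_ne_zero hl0.ne'))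
    refine h1.mono ?_
    intro u hu
    exact right_ne_zero_of_mul hu
  · intro v
    have h := hF (l * v)
    rw [Real.fourier_real_eq] at h ⊢
    have h2 := Measure.integral_comp_mul_left (fun x : ℝ => Real.fourierChar (-(x * (l * v))) • K x) l⁻¹
    rw [h] at h2
    have h3 : ∫ u, Real.fourierChar (-(u * v)) • ((I : ℂ)⁻¹ * K (l⁻¹ * u)) =
      (I : ℂ)⁻¹ * ∫ u, Real.fourierChar (-((l⁻¹ * u) * (l * v))) • K (l⁻¹ * u) := by
      rw [← integral_const_mul]
      congr 1; ext u
      rw [show l⁻¹ * u * (l * v) = u * v by field_simp]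
      simp only [Circle.smul_def, smul_eq_mul]; ring
    rw [h3, h2, inv_inv, abs_of_pos hl0]
    simp
  · intro v
    have := hg0 (l * v)
    positivity
  · exact ((hgi.comp_mul_left' hl0.ne').const_mul l).const_mul _
  · rw [integral_const_mul, integral_const_mul, Measure.integral_comp_mul_left, abs_of_pos (inv_pos.2 hl0)]
    simp only [smul_eq_mul]
    rw [← hIdef]; field_simp
  · rw [integral_const_mul, integral_const_mul]
    have h2 : ∫ v in Set.Icc (-s) s, g (l * v) = l⁻¹ * ∫ v in Set.Icc (-(l * s)) (l * s), g v := by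
      rw [integral_Icc_eq_integral_Ioc, integral_Icc_eq_integral_Ioc,
        ← intervalIntegral.integral_of_le (by linarith), ← intervalIntegral.integral_of_le (by nlinarith),
        intervalIntegral.integral_comp_mul_left _ hl0.ne']
      simp
    rw [h2]
    field_simp
    nlinarith

lemma fourier_limit (f : ℝ → ℝ) (hfm : Measurable f) (M : ℝ) (hM : ∀ t, |f t| ≤ M)
    (hf0 : ∀ t < 0, f t = 0) (H : ℂ → ℂ) (hH : ContinuousOn H {s | 0 ≤ s.re})
    (hlap : ∀ s : ℂ, 0 < s.re → ∫ t : ℝ, (f t : ℂ) * Complex.exp (-s * t) = H s)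
    (K : ℝ → ℂ) (g : ℝ → ℝ) (hK : Continuous K) (hKs : HasCompactSupport K)
    (hF : ∀ v, 𝓕 K v = (g v : ℂ)) (hgi : Integrable g) :
    Tendsto (fun y => ∫ t, f t * g (t - y)) atTop (𝓝 0) := by
  have hKi : Integrable K := hK.integrable_of_hasCompactSupport hKs
  have hM0 : 0 ≤ M := (abs_nonneg _).trans (hM 0)
  -- identity for positive ε
  have key : ∀ y ε : ℝ, 0 < ε → ∫ t, (f t * Real.exp (-ε * t) : ℝ) * (g (t - y) : ℂ) =
      ∫ u, Real.fourierChar (u * y) • K u * H (ε + 2 * Real.pi * Complex.I * u) := by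
    intro y ε hε
    let K' : ℝ → ℂ := fun u => Real.fourierChar (u * y) • K u
    have hK'c : Continuous K' := by
      have : K' = fun u => (Real.fourierChar (u * y) : ℂ) * K u := by
        ext u; simp [K', Circle.smul_def]
      rw [this]
      have h1 : Continuous fun u : ℝ => (Real.fourierChar (u * y) : ℂ) :=
        continuous_subtype_val.comp (Real.continuous_fourierChar.comp (by fun_prop))
      exact h1.mul hK
    have hK'i : Integrable K' := by
      refine hK'c.integrable_of_hasCompactSupport (hKs.mono ?_)
      intro u hu
      simp only [Function.mem_support, K', Circle.smul_def, smul_eq_mul] at hu ⊢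
      exact right_ne_zero_of_mul hu
    have hFK' : ∀ t, 𝓕 K' t = (g (t - y) : ℂ) := by
      intro t
      rw [← hF, Real.fourier_real_eq, Real.fourier_real_eq]
      congr 1; ext u
      simp only [K', smul_smul]
      rw [← AddChar.map_add_eq_mul]
      congr 2; ring
    let F : ℝ → ℂ := fun t => ((f t * Real.exp (-ε * t) : ℝ) : ℂ)
    have hFi : Integrable F := by
      suffices hsuff : Integrable (fun t => f t * Real.exp (-ε * t)) from hsuff.ofReal
      have h1 : Integrable (fun t => (Set.Ici (0:ℝ)).indicator (fun t => M * Real.exp (-ε * t)) t) := by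
        rw [integrable_indicator_iff measurableSet_Ici, integrableOn_Ici_iff_integrableOn_Ioi]
        exact (integrableOn_exp_mul_Ioi (by linarith) 0).const_mul M
      refine h1.mono' (by fun_prop) (Eventually.of_forall fun t => ?_)
      by_cases ht : 0 ≤ t
      · rw [Set.indicator_of_mem (by exact ht), norm_mul, Real.norm_eq_abs, Real.norm_eq_abs, Real.abs_exp]
        exact mul_le_mul_of_nonneg_right (hM t) (Real.exp_pos _).le
      · rw [Set.indicator_of_notMem (by exact ht), hf0 t (not_le.1 ht)]; simp
    have hflip := VectorFourier.integral_fourierIntegral_smul_eq_flip (L := innerₗ ℝ)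
      (μ := volume) (ν := volume) Real.continuous_fourierChar (by exact continuous_inner) hK'i hFi
    have e1 : ∫ t, F t * (g (t - y) : ℂ) = ∫ t, 𝓕 K' t • F t := by
      congr 1; ext t; rw [hFK', smul_eq_mul, mul_comm]
    have e2 : ∀ u, 𝓕 F u = H (ε + 2 * Real.pi * Complex.I * u) := by
      intro u
      rw [← hlap _ (by simp [hε]), Real.fourier_real_eq_integral_exp_smul]
      congr 1; ext t
      simp only [F, smul_eq_mul]
      push_cast
      rw [mul_left_comm, ← Complex.exp_add]
      congr 2; ring
    have e3 : ∫ u, K' u * H (ε + 2 * Real.pi * Complex.I * u) = ∫ u, K' u • 𝓕 F u := by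
      congr 1; ext u; rw [e2, smul_eq_mul]
    change ∫ t, F t * (g (t - y) : ℂ) = ∫ u, K' u * H (ε + 2 * Real.pi * Complex.I * u)
    rw [e1, e3]
    rw [flip_innerₗ] at hflip
    exact hflip
  -- pass to the limit
  have key0 : ∀ y : ℝ, ((∫ t, f t * g (t - y) : ℝ) : ℂ) =
      ∫ u, Real.fourierChar (u * y) • (K u * H (2 * Real.pi * Complex.I * u)) := by
    intro y
    have hgy : Integrable (fun t => g (t - y)) := hgi.comp_sub_right y
    have L1 : Tendsto (fun ε : ℝ => ∫ t, (f t * Real.exp (-ε * t) : ℝ) * (g (t - y) : ℂ)) (𝓝[>] 0)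
        (𝓝 (∫ t, (f t : ℂ) * (g (t - y) : ℂ))) := by
      refine tendsto_integral_filter_of_dominated_convergence (fun t => M * |g (t - y)|) ?_ ?_ ?_ ?_
      · refine Eventually.of_forall fun ε => ?_
        refine AEStronglyMeasurable.mul ?_ ?_
        · exact (Complex.measurable_ofReal.comp (by fun_prop)).aestronglyMeasurable
        · exact hgy.ofReal.aestronglyMeasurable
      · filter_upwards [self_mem_nhdsWithin] with ε hε
        refine Eventually.of_forall fun t => ?_
        rw [norm_mul, Complex.norm_real, Complex.norm_real, norm_mul, Real.norm_eq_abs, Real.norm_eq_abs,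
          Real.norm_eq_abs, Real.abs_exp]
        refine mul_le_mul_of_nonneg_right ?_ (abs_nonneg _)
        by_cases ht : 0 ≤ t
        · refine (mul_le_mul (hM t) (Real.exp_le_one_iff.2 ?_) (Real.exp_pos _).le hM0).trans (by simp)
          have : 0 < ε := hε
          nlinarith
        · rw [hf0 t (not_le.1 ht)]; simpa using hM0
      · exact (hgy.abs).const_mul M
      · refine Eventually.of_forall fun t => ?_
        refine Tendsto.mul_const _ ?_
        have : Continuous fun ε : ℝ => ((f t * Real.exp (-ε * t) : ℝ) : ℂ) := by fun_prop
        have h := this.tendsto 0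
        simp only [neg_zero, zero_mul, Real.exp_zero, mul_one] at h
        exact h.mono_left nhdsWithin_le_nhds
    have L2 : Tendsto (fun ε : ℝ => ∫ u, Real.fourierChar (u * y) • K u * H (ε + 2 * Real.pi * Complex.I * u))
        (𝓝[>] 0) (𝓝 (∫ u, Real.fourierChar (u * y) • K u * H (2 * Real.pi * Complex.I * u))) := by
      have hcont : ContinuousOn (fun p : ℝ × ℝ => H (p.1 + 2 * Real.pi * Complex.I * p.2)) (Set.Ici 0 ×ˢ Set.univ) := by
        refine hH.comp (by fun_prop) ?_
        rintro ⟨e, u⟩ ⟨he, -⟩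
        simpa using he
      have hcpt : IsCompact (Set.Icc (0:ℝ) 1 ×ˢ tsupport K) := isCompact_Icc.prod hKs
      obtain ⟨C, hC⟩ := hcpt.exists_bound_of_continuousOn (hcont.mono (by
        rintro ⟨e, u⟩ ⟨he, -⟩; exact ⟨he.1, trivial⟩))
      refine tendsto_integral_filter_of_dominated_convergence (fun u => ‖K u‖ * C) ?_ ?_ ?_ ?_
      · filter_upwards [self_mem_nhdsWithin] with ε hε
        refine Continuous.aestronglyMeasurable ?_
        refine Continuous.mul ?_ ?_
        · have h1 : Continuous fun u : ℝ => (Real.fourierChar (u * y) : ℂ) :=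
            continuous_subtype_val.comp (Real.continuous_fourierChar.comp (by fun_prop))
          exact h1.mul hK
        · refine hcont.comp_continuous (f := fun u : ℝ => ((ε, u) : ℝ × ℝ)) (by fun_prop) ?_
          intro u; exact ⟨Set.mem_Ici.2 (le_of_lt hε), trivial⟩
      · have : Set.Ioc (0:ℝ) 1 ∈ 𝓝[>] (0:ℝ) := Ioc_mem_nhdsGT one_pos
        filter_upwards [this] with ε hε
        refine Eventually.of_forall fun u => ?_
        rw [norm_mul, Circle.norm_smul]
        by_cases hu : u ∈ tsupport K
        · exact mul_le_mul_of_nonneg_left (hC (ε, u) ⟨⟨hε.1.le, hε.2⟩, hu⟩) (norm_nonneg _)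
        · rw [image_eq_zero_of_notMem_tsupport hu]; simp
      · exact hKi.norm.mul_const C
      · refine Eventually.of_forall fun u => ?_
        refine Tendsto.const_mul _ ?_
        have h := hcont (0, u) ⟨Set.mem_Ici.2 (le_refl _), trivial⟩
        have h2 : Tendsto (fun ε : ℝ => ((ε, u) : ℝ × ℝ)) (𝓝[>] 0) (𝓝[Set.Ici 0 ×ˢ Set.univ] (0, u)) := by
          refine tendsto_nhdsWithin_iff.2 ⟨?_, ?_⟩
          · have : Continuous fun ε : ℝ => ((ε, u) : ℝ × ℝ) := by fun_prop
            exact (this.tendsto 0).mono_left nhdsWithin_le_nhds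
          · filter_upwards [self_mem_nhdsWithin] with ε hε
            exact ⟨Set.mem_Ici.2 (le_of_lt hε), trivial⟩
        have h3 := h.tendsto.comp h2
        simpa [Function.comp_def] using h3
    have huniq := tendsto_nhds_unique (L1.congr' (by
      filter_upwards [self_mem_nhdsWithin] with ε hε using key y ε hε)) L2
    rw [← integral_complex_ofReal]
    push_cast
    rw [huniq]
    congr 1; ext u; rw [smul_mul_assoc]
  have RL := (Real.tendsto_integral_exp_smul_cocompact (fun u : ℝ => K u * H (2 * Real.pi * Complex.I * u))).comp
    ((tendsto_neg_atTop_atBot (G := ℝ)).mono_right (atBot_le_cocompact))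
  have RL2 : Tendsto (fun y => ((∫ t, f t * g (t - y) : ℝ) : ℂ)) atTop (𝓝 0) := by
    refine RL.congr fun y => ?_
    rw [key0]
    simp
  have := (Complex.continuous_re.tendsto 0).comp RL2
  simpa [Function.comp_def] using this

end Sub14

end

section
open MeasureTheory Filter Topology

namespace Sub14

lemma tauberian (B : ℝ → ℝ) (hBm : Measurable B) (M κ : ℝ) (hB0 : ∀ t, 0 ≤ B t) (hBM : ∀ t, B t ≤ M)
    (hneg : ∀ t < 0, B t = 0) (hmono : ∀ t t', t ≤ t' → Real.exp t * B t ≤ Real.exp t' * B t')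
    (H : ℂ → ℂ) (hH : ContinuousOn H {s | 0 ≤ s.re})
    (hlap : ∀ s : ℂ, 0 < s.re →
      ∫ t : ℝ, ((B t - (Set.Ici (0:ℝ)).indicator (fun _ => κ) t : ℝ) : ℂ) * Complex.exp (-s * t) = H s) :
    Tendsto B atTop (𝓝 κ) := by
  have hM0 : 0 ≤ M := (hB0 0).trans (hBM 0)
  have hBi : ∀ g : ℝ → ℝ, Integrable g → ∀ y, Integrable (fun v => B (v + y) * g v) := by
    intro g hg y
    refine hg.bdd_mul (c := M) (hBm.comp (measurable_id.add_const y)).aestronglyMeasurable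
      (Eventually.of_forall fun v => ?_)
    rw [Real.norm_eq_abs, abs_of_nonneg (hB0 _)]; exact hBM _
  -- smoothed limit
  have hlim : ∀ (K : ℝ → ℂ) (g : ℝ → ℝ), Continuous K → HasCompactSupport K →
      (∀ v, FourierTransform.fourier K v = (g v : ℂ)) → Integrable g → ∫ v, g v = 1 →
      Tendsto (fun y => ∫ v, B (v + y) * g v) atTop (𝓝 κ) := by
    intro K g hK hKs hF hgi hg1
    have h1 := fourier_limit (fun t => B t - (Set.Ici (0:ℝ)).indicator (fun _ => κ) t)
      (hBm.sub (measurable_const.indicator measurableSet_Ici)) (M + |κ|) (by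
        intro t
        refine (abs_sub _ _).trans (add_le_add ?_ ?_)
        · rw [abs_of_nonneg (hB0 _)]; exact hBM t
        · by_cases ht : t ∈ Set.Ici (0:ℝ)
          · rw [Set.indicator_of_mem ht]
          · rw [Set.indicator_of_notMem ht]; simp) (by
        intro t ht
        simp only [hneg t ht]
        rw [Set.indicator_of_notMem (by simpa using ht)]; simp) H hH hlap K g hK hKs hF hgi
    have hind : ∀ y, Integrable (fun v => (Set.Ici (0:ℝ)).indicator (fun _ => κ) (v + y) * g v) := by
      intro y
      refine hgi.bdd_mul (c := |κ|) ((measurable_const.indicator measurableSet_Ici).comp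
        (measurable_id.add_const y)).aestronglyMeasurable (Eventually.of_forall fun v => ?_)
      simp only [Function.comp, Set.indicator_apply, id]
      split_ifs <;> simp
    have h2 : Tendsto (fun y => ∫ v, (Set.Ici (0:ℝ)).indicator (fun _ => κ) (v + y) * g v) atTop (𝓝 κ) := by
      have : κ = ∫ v, κ * g v := by rw [integral_const_mul, hg1, mul_one]
      conv => arg 3; rw [this]
      refine tendsto_integral_filter_of_dominated_convergence (fun v => |κ| * |g v|) ?_ ?_ ?_ ?_
      · exact Eventually.of_forall fun y => (hind y).aestronglyMeasurable
      · refine Eventually.of_forall fun y => Eventually.of_forall fun v => ?_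
        rw [norm_mul]
        refine mul_le_mul_of_nonneg_right ?_ (abs_nonneg _)
        simp only [Set.indicator_apply]
        split_ifs <;> simp
      · exact hgi.abs.const_mul _
      · refine Eventually.of_forall fun v => ?_
        refine tendsto_const_nhds.congr' ?_
        filter_upwards [eventually_ge_atTop (-v)] with y hy
        rw [Set.indicator_of_mem]
        simp only [Set.mem_Ici]; linarith
    have h3 := h1.add h2
    rw [zero_add] at h3
    refine h3.congr fun y => ?_
    have e1 : ∫ t, (B t - (Set.Ici (0:ℝ)).indicator (fun _ => κ) t) * g (t - y) =
        ∫ v, (B (v + y) - (Set.Ici (0:ℝ)).indicator (fun _ => κ) (v + y)) * g v := by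
      rw [← integral_add_right_eq_self _ y]
      simp
    rw [e1, ← integral_add _ (hind y)]
    · congr 1; ext v; ring
    · have := (hBi g hgi y).sub (hind y)
      refine this.congr (Eventually.of_forall fun v => ?_)
      simp only [Pi.sub_apply]; ring
  have hlocal : ∀ η : ℝ, 0 < η → η < 1 → ∀ᶠ y in atTop,
      B y ≤ Real.exp (2 * η) * (κ + η) / (1 - η) ∧ Real.exp (-(2 * η)) * (κ - η - M * η) ≤ B y := by
    intro η hη hη1
    obtain ⟨K, g, hK, hKs, hF, hg0, hgi, hg1, hgη⟩ := kernel η η hη hη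
    have hl := hlim K g hK hKs hF hgi hg1
    have hup : ∀ y, Real.exp (-(2 * η)) * B (y - η) * (1 - η) ≤ ∫ v, B (v + y) * g v := by
      intro y
      calc _ ≤ Real.exp (-(2 * η)) * B (y - η) * ∫ v in Set.Icc (-η) η, g v :=
            mul_le_mul_of_nonneg_left hgη (mul_nonneg (Real.exp_pos _).le (hB0 _))
        _ = ∫ v in Set.Icc (-η) η, Real.exp (-(2 * η)) * B (y - η) * g v := by rw [integral_const_mul]
        _ ≤ ∫ v in Set.Icc (-η) η, B (v + y) * g v := by
            refine setIntegral_mono_on (hgi.integrableOn.const_mul _) (hBi g hgi y).integrableOn measurableSet_Icc ?_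
            intro v hv
            refine mul_le_mul_of_nonneg_right ?_ (hg0 v)
            have h := hmono (y - η) (v + y) (by linarith [hv.1])
            have h2 : B (v + y) = Real.exp (-(v+y)) * (Real.exp (v + y) * B (v + y)) := by
              rw [← mul_assoc, ← Real.exp_add]; simp
            rw [h2]
            refine le_trans ?_ (mul_le_mul_of_nonneg_left h (Real.exp_pos _).le)
            rw [← mul_assoc, ← Real.exp_add]
            refine mul_le_mul_of_nonneg_right (Real.exp_le_exp.2 ?_) (hB0 _)
            linarith [hv.2]
        _ ≤ _ := setIntegral_le_integral (hBi g hgi y)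
            (Eventually.of_forall fun v => mul_nonneg (hB0 _) (hg0 v))
    have hlo : ∀ y, ∫ v, B (v + y) * g v ≤ Real.exp (2 * η) * B (y + η) + M * η := by
      intro y
      rw [← integral_add_compl measurableSet_Icc (hBi g hgi y) (s := Set.Icc (-η) η)]
      refine add_le_add ?_ ?_
      · calc _ ≤ ∫ v in Set.Icc (-η) η, Real.exp (2 * η) * B (y + η) * g v := by
              refine setIntegral_mono_on (hBi g hgi y).integrableOn (hgi.integrableOn.const_mul _) measurableSet_Icc ?_
              intro v hv
              refine mul_le_mul_of_nonneg_right ?_ (hg0 v)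
              have h := hmono (v + y) (y + η) (by linarith [hv.2])
              have h2 : B (v + y) = Real.exp (-(v+y)) * (Real.exp (v + y) * B (v + y)) := by
                rw [← mul_assoc, ← Real.exp_add]; simp
              rw [h2]
              refine le_trans (mul_le_mul_of_nonneg_left h (Real.exp_pos _).le) ?_
              rw [← mul_assoc, ← Real.exp_add]
              refine mul_le_mul_of_nonneg_right (Real.exp_le_exp.2 ?_) (hB0 _)
              linarith [hv.1]
          _ = Real.exp (2 * η) * B (y + η) * ∫ v in Set.Icc (-η) η, g v := by rw [integral_const_mul]
          _ ≤ Real.exp (2 * η) * B (y + η) * 1 := by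
              refine mul_le_mul_of_nonneg_left ?_ (mul_nonneg (Real.exp_pos _).le (hB0 _))
              rw [← hg1]
              exact setIntegral_le_integral hgi (Eventually.of_forall hg0)
          _ = _ := mul_one _
      · calc _ ≤ ∫ v in (Set.Icc (-η) η)ᶜ, M * g v := by
              refine setIntegral_mono_on (hBi g hgi y).integrableOn (hgi.integrableOn.const_mul _) measurableSet_Icc.compl ?_
              intro v hv
              exact mul_le_mul_of_nonneg_right (hBM _) (hg0 v)
          _ = M * ∫ v in (Set.Icc (-η) η)ᶜ, g v := by rw [integral_const_mul]
          _ ≤ M * η := by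
              refine mul_le_mul_of_nonneg_left ?_ hM0
              have := integral_add_compl measurableSet_Icc hgi (s := Set.Icc (-η) η)
              linarith
    have h1 := hl.eventually (gt_mem_nhds (show κ < κ + η by linarith))
    have h2 := hl.eventually (lt_mem_nhds (show κ - η < κ by linarith))
    have h1' := (tendsto_atTop_add_const_right atTop η tendsto_id).eventually h1
    have h2' := (tendsto_atTop_add_const_right atTop (-η) tendsto_id).eventually h2
    filter_upwards [h1', h2'] with y hy1 hy2
    constructor
    · have := (hup (y + η)).trans hy1.le
      rw [add_sub_cancel_right] at this
      rw [le_div_iff₀ (by linarith)]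
      have e : Real.exp (2 * η) * (Real.exp (-(2 * η)) * B y * (1 - η)) = B y * (1 - η) := by
        rw [← mul_assoc, ← mul_assoc, ← Real.exp_add]; simp
      rw [← e]
      exact mul_le_mul_of_nonneg_left this (Real.exp_pos _).le
    · have := hy2.le.trans (hlo (y + -η))
      rw [neg_add_cancel_right] at this
      have e : Real.exp (-(2 * η)) * (Real.exp (2 * η) * B y) = B y := by
        rw [← mul_assoc, ← Real.exp_add]; simp
      rw [← e]
      exact mul_le_mul_of_nonneg_left (by linarith) (Real.exp_pos _).le
  have hc1 : Tendsto (fun η : ℝ => Real.exp (2 * η) * (κ + η) / (1 - η)) (𝓝[>] 0) (𝓝 κ) := by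
    have : ContinuousAt (fun η : ℝ => Real.exp (2 * η) * (κ + η) / (1 - η)) 0 := by
      refine ContinuousAt.div (by fun_prop) (by fun_prop) (by simp)
    have h := this.tendsto.mono_left (nhdsWithin_le_nhds (s := Set.Ioi 0))
    simpa using h
  have hc2 : Tendsto (fun η : ℝ => Real.exp (-(2 * η)) * (κ - η - M * η)) (𝓝[>] 0) (𝓝 κ) := by
    have : Continuous (fun η : ℝ => Real.exp (-(2 * η)) * (κ - η - M * η)) := by fun_prop
    have h := (this.tendsto 0).mono_left (nhdsWithin_le_nhds (s := Set.Ioi 0))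
    simpa using h
  have hsmall : Set.Ioo (0:ℝ) 1 ∈ 𝓝[>] (0:ℝ) := Ioo_mem_nhdsGT one_pos
  rw [tendsto_order]
  constructor
  · intro a ha
    obtain ⟨η, h1, h2⟩ := ((hc2.eventually (lt_mem_nhds ha)).and hsmall).exists
    filter_upwards [hlocal η h2.1 h2.2] with y hy using h1.trans_le hy.2
  · intro a ha
    obtain ⟨η, h1, h2⟩ := ((hc1.eventually (gt_mem_nhds ha)).and hsmall).exists
    filter_upwards [hlocal η h2.1 h2.2] with y hy using hy.1.trans_lt h1

lemma wiener_ikehara (a : ℕ → ℝ) (ha : ∀ n, 0 ≤ a n) (M κ : ℝ)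
    (hM : ∀ n : ℕ, ∑ k ∈ Finset.Icc 1 n, a k ≤ M * n)
    (G : ℂ → ℂ) (hG : ContinuousOn G {s | 1 ≤ s.re})
    (hGeq : ∀ s : ℂ, 1 < s.re → G s = LSeries (fun n => (a n : ℂ)) s - κ / (s - 1)) :
    Tendsto (fun n : ℕ => (∑ k ∈ Finset.Icc 1 n, a k) / n) atTop (𝓝 κ) := by
  let S : ℝ → ℝ := fun x => ∑ k ∈ Finset.Icc 1 ⌊x⌋₊, a k
  have hSmono : Monotone S := by
    intro x y hxy
    exact Finset.sum_le_sum_of_subset_of_nonneg (Finset.Icc_subset_Icc le_rfl (Nat.floor_mono hxy))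
      (fun _ _ _ => ha _)
  have hS0 : ∀ x, 0 ≤ S x := fun x => Finset.sum_nonneg fun _ _ => ha _
  have hM0 : 0 ≤ M := by
    have := (hS0 1).trans (hM _)
    simpa using this
  have hSM : ∀ x, 0 ≤ x → S x ≤ M * x := by
    intro x hx
    exact (hM _).trans (mul_le_mul_of_nonneg_left (Nat.floor_le hx) hM0)
  let B : ℝ → ℝ := (Set.Ici (0:ℝ)).indicator fun t => Real.exp (-t) * S (Real.exp t)
  have hSe : Measurable fun t => S (Real.exp t) :=
    (hSmono.comp Real.exp_monotone).measurable
  have hBm : Measurable B := by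
    refine Measurable.indicator ?_ measurableSet_Ici
    exact (by fun_prop : Measurable fun t : ℝ => Real.exp (-t)).mul hSe
  have hBpos : ∀ t, 0 ≤ t → B t = Real.exp (-t) * S (Real.exp t) := fun t ht =>
    Set.indicator_of_mem (by exact ht) _
  have hBneg : ∀ t < 0, B t = 0 := fun t ht => Set.indicator_of_notMem (by simpa using ht) _
  have hB0 : ∀ t, 0 ≤ B t := fun t => Set.indicator_nonneg (fun t _ => mul_nonneg (Real.exp_pos _).le (hS0 _)) t
  have hBM : ∀ t, B t ≤ M := by
    intro t
    by_cases ht : 0 ≤ t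
    · rw [hBpos t ht]
      refine (mul_le_mul_of_nonneg_left (hSM _ (Real.exp_pos t).le) (Real.exp_pos _).le).trans ?_
      rw [mul_left_comm, ← Real.exp_add]; simp
    · rw [hBneg t (not_le.1 ht)]; exact hM0
  have hBmono : ∀ t t', t ≤ t' → Real.exp t * B t ≤ Real.exp t' * B t' := by
    intro t t' htt
    by_cases ht : 0 ≤ t
    · rw [hBpos t ht, hBpos t' (ht.trans htt), ← mul_assoc, ← mul_assoc, ← Real.exp_add, ← Real.exp_add]
      simpa using hSmono (Real.exp_le_exp.2 htt)
    · rw [hBneg t (not_le.1 ht), mul_zero]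
      exact mul_nonneg (Real.exp_pos _).le (hB0 _)
  have hmain : Tendsto B atTop (𝓝 κ) := by
    refine tauberian B hBm M κ hB0 hBM hBneg hBmono (fun s => (G (s + 1) - κ) / (s + 1)) ?_ ?_
    · refine ContinuousOn.div ?_ (by fun_prop) ?_
      · refine (hG.comp (by fun_prop) ?_).sub continuousOn_const
        intro s hs
        have : 0 ≤ s.re := hs
        simpa using this
      · intro s hs h
        have h0 : 0 ≤ s.re := hs
        have := congrArg Complex.re h
        simp at this
        linarith
    · intro s hs
      have hs0 : s ≠ 0 := by rintro rfl; simp at hs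
      have hs1 : s + 1 ≠ 0 := by
        intro h
        have := congrArg Complex.re h
        simp at this
        linarith
      have hO : (fun n ↦ ∑ k ∈ Finset.Icc 1 n, a k) =O[atTop] fun n ↦ (n : ℝ) ^ (1:ℝ) := by
        refine Asymptotics.IsBigO.of_bound M (Eventually.of_forall fun n => ?_)
        rw [Real.rpow_one, Real.norm_eq_abs, abs_of_nonneg (Finset.sum_nonneg fun _ _ => ha _)]
        simpa using hM n
      have hL := LSeries_eq_mul_integral_of_nonneg a (r := 1) zero_le_one (s := s + 1)
        (by simpa using hs) hO ha
      -- change of variables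
      have hcv : ∫ t in Set.Ioi (1 : ℝ), ((∑ k ∈ Finset.Icc 1 ⌊t⌋₊, (a k : ℂ)) * (t : ℂ) ^ (-(s + 1 + 1))) =
          ∫ t in Set.Ioi (0:ℝ), (Real.exp (-t) * S (Real.exp t) : ℝ) * Complex.exp (-s * t) := by
        have himg : Real.exp '' Set.Ioi (0:ℝ) = Set.Ioi 1 := by
          ext x
          simp only [Set.mem_image, Set.mem_Ioi]
          constructor
          · rintro ⟨t, ht, rfl⟩; exact Real.one_lt_exp_iff.2 ht
          · intro hx; exact ⟨Real.log x, Real.log_pos hx, Real.exp_log (by linarith)⟩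
        rw [← himg, integral_image_eq_integral_abs_deriv_smul measurableSet_Ioi
          (fun x _ => (Real.hasDerivAt_exp x).hasDerivWithinAt) Real.exp_injective.injOn]
        refine setIntegral_congr_fun measurableSet_Ioi fun t ht => ?_
        simp only [S]
        rw [Complex.cpow_def_of_ne_zero (by simp [Real.exp_ne_zero]), ← Complex.ofReal_log (Real.exp_pos t).le,
          Real.log_exp, Real.abs_exp]
        simp only [Complex.real_smul]
        push_cast
        rw [mul_left_comm, ← Complex.exp_add, mul_right_comm, ← Complex.exp_add, mul_comm]
        congr 2
        ring
      have hint1 : ∫ t : ℝ, (B t : ℂ) * Complex.exp (-s * t) = LSeries (fun n => (a n : ℂ)) (s + 1) / (s + 1) := by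
        rw [hL, mul_div_cancel_left₀ _ hs1, hcv, ← integral_Ici_eq_integral_Ioi, ← integral_indicator measurableSet_Ici]
        congr 1; ext t
        by_cases ht : 0 ≤ t
        · rw [Set.indicator_of_mem (by exact ht), hBpos t ht]
        · rw [Set.indicator_of_notMem (by exact ht), hBneg t (not_le.1 ht)]; simp
      have hint2 : ∫ t : ℝ, (((Set.Ici (0:ℝ)).indicator (fun _ => κ) t : ℝ) : ℂ) * Complex.exp (-s * t) = κ / s := by
        have e := integral_exp_mul_complex_Ioi (a := -s) (by simpa using hs) 0
        have : ∀ t : ℝ, (((Set.Ici (0:ℝ)).indicator (fun _ => κ) t : ℝ) : ℂ) * Complex.exp (-s * t) =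
            (Set.Ici (0:ℝ)).indicator (fun t : ℝ => (κ : ℂ) * Complex.exp (-s * t)) t := by
          intro t
          simp only [Set.indicator_apply]
          split_ifs <;> simp
        simp_rw [this]
        rw [integral_indicator measurableSet_Ici, integral_Ici_eq_integral_Ioi, integral_const_mul, e]
        simp; field_simp
      have hexp : Integrable (fun t : ℝ => (Set.Ici (0:ℝ)).indicator (fun t : ℝ => Complex.exp (-s * t)) t) := by
        rw [integrable_indicator_iff measurableSet_Ici, integrableOn_Ici_iff_integrableOn_Ioi]
        exact integrableOn_exp_mul_complex_Ioi (by simpa using hs) 0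
      have hbd : ∀ b : ℝ → ℝ, Measurable b → ∀ C, (∀ t, |b t| ≤ C) → (∀ t < 0, b t = 0) →
          Integrable (fun t : ℝ => (b t : ℂ) * Complex.exp (-s * t)) := by
        intro b hb C hC hb0
        have := hexp.bdd_mul (c := C) (f := fun t => (b t : ℂ))
          (Complex.measurable_ofReal.comp hb).aestronglyMeasurable
          (Eventually.of_forall fun t => by simpa using hC t)
        refine this.congr (Eventually.of_forall fun t => ?_)
        by_cases ht : 0 ≤ t
        · simp only []
          rw [Set.indicator_of_mem (by exact ht)]
        · simp only []
          rw [hb0 t (not_le.1 ht)]; simp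
      have hI1 := hbd B hBm M (fun t => by rw [abs_of_nonneg (hB0 t)]; exact hBM t) hBneg
      have hI2 := hbd ((Set.Ici (0:ℝ)).indicator (fun _ => κ)) (measurable_const.indicator measurableSet_Ici) |κ|
        (fun t => by simp only [Set.indicator_apply]; split_ifs <;> simp)
        (fun t ht => Set.indicator_of_notMem (by simpa using ht) _)
      have hsplit := integral_sub hI1 hI2
      rw [hint1, hint2] at hsplit
      have : ∫ t : ℝ, ((B t - (Set.Ici (0:ℝ)).indicator (fun _ => κ) t : ℝ) : ℂ) * Complex.exp (-s * t) =
        LSeries (fun n => (a n : ℂ)) (s + 1) / (s + 1) - κ / s := by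
        rw [← hsplit]; congr 1; ext t; push_cast; ring
      rw [this, hGeq (s + 1) (by simpa using hs)]
      rw [add_sub_cancel_right]
      field_simp
      ring
  have hcomp := hmain.comp (Real.tendsto_log_atTop.comp tendsto_natCast_atTop_atTop)
  refine hcomp.congr' ?_
  filter_upwards [eventually_ge_atTop 1] with n hn
  have hn' : (1:ℝ) ≤ n := by exact_mod_cast hn
  simp only [Function.comp]
  rw [hBpos _ (Real.log_nonneg hn'), Real.exp_neg, Real.exp_log (by linarith)]
  simp only [S, Nat.floor_natCast]
  rw [div_eq_inv_mul]

open ArithmeticFunction in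
lemma psi_ap (q : ℕ) [NeZero q] (a : ZMod q) (ha : IsUnit a) :
    Tendsto (fun n : ℕ => (∑ k ∈ Finset.Icc 1 n, vonMangoldt.residueClass a k) / n) atTop
      (𝓝 ((q.totient : ℝ)⁻¹)) := by
  refine wiener_ikehara _ (vonMangoldt.residueClass_nonneg a) (Real.log 4 + 4) _ ?_
    (vonMangoldt.LFunctionResidueClassAux a) (vonMangoldt.continuousOn_LFunctionResidueClassAux a) ?_
  · intro n
    refine (Finset.sum_le_sum fun k _ => vonMangoldt.residueClass_le a k).trans ?_
    have := Chebyshev.psi_le_const_mul_self (x := n) (Nat.cast_nonneg n)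
    refine le_trans (le_of_eq ?_) this
    rw [Chebyshev.psi, Nat.floor_natCast]
    rfl
  · intro s hs
    rw [vonMangoldt.eqOn_LFunctionResidueClassAux ha hs]
    simp

end Sub14

end

section
open Filter Topology

namespace Sub14

/-- counting function of primes satisfying `P` -/
noncomputable def cnt (P : ℕ → Prop) (n : ℕ) : ℝ := by
  classical
  exact (((Finset.range (n + 1)).filter fun k => k.Prime ∧ P k).card : ℝ)

open Classical in
lemma theta_to_pi (P : ℕ → Prop) (κ : ℝ)
    (h : Tendsto (fun n : ℕ => (∑ k ∈ (Finset.range (n + 1)).filter fun k => k.Prime ∧ P k, Real.log k) / n)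
      atTop (𝓝 κ)) :
    Tendsto (fun n : ℕ => cnt P n * Real.log n / n) atTop (𝓝 κ) := by
  set θ : ℕ → ℝ := fun n => ∑ k ∈ (Finset.range (n + 1)).filter fun k => k.Prime ∧ P k, Real.log k with hθ
  have hlow : ∀ n : ℕ, 1 ≤ n → θ n / n ≤ cnt P n * Real.log n / n := by
    intro n hn
    refine div_le_div_of_nonneg_right ?_ (Nat.cast_nonneg n)
    unfold cnt
    rw [← nsmul_eq_mul]
    refine Finset.sum_le_card_nsmul _ _ _ fun k hk => ?_
    simp only [Finset.mem_filter, Finset.mem_range] at hk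
    exact Real.log_le_log (by exact_mod_cast hk.2.1.pos) (by exact_mod_cast Nat.lt_succ_iff.1 hk.1)
  have hup : ∀ δ : ℝ, 0 < δ → δ < 1 → ∀ n : ℕ, 1 ≤ n →
      cnt P n * Real.log n / n ≤ θ n / n / (1 - δ) + 2 * ((n:ℝ) ^ (-δ) * Real.log n) := by
    intro δ h0 h1 n hn
    have hn0 : (0:ℝ) < n := by exact_mod_cast hn
    have hlog : 0 ≤ Real.log n := Real.log_nonneg (by exact_mod_cast hn)
    have key : cnt P n * ((1 - δ) * Real.log n) ≤ θ n + (2 * (n:ℝ) ^ (1 - δ)) * ((1 - δ) * Real.log n) := by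
      have hcard : (((Finset.range (n+1)).filter fun k => k.Prime ∧ P k ∧ (k:ℝ) ≤ (n:ℝ) ^ (1 - δ)).card : ℝ)
          ≤ 2 * (n:ℝ) ^ (1 - δ) := by
        have hsub : ((Finset.range (n+1)).filter fun k => k.Prime ∧ P k ∧ (k:ℝ) ≤ (n:ℝ) ^ (1 - δ)) ⊆
            Finset.range (⌊(n:ℝ) ^ (1 - δ)⌋₊ + 1) := by
          intro k hk
          simp only [Finset.mem_filter, Finset.mem_range] at hk ⊢
          exact Nat.lt_succ_of_le (Nat.le_floor hk.2.2.2)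
        have h2 := Finset.card_le_card hsub
        rw [Finset.card_range] at h2
        have h3 : (1:ℝ) ≤ (n:ℝ) ^ (1 - δ) := Real.one_le_rpow (by exact_mod_cast hn) (by linarith)
        have h4 := Nat.floor_le (show 0 ≤ (n:ℝ) ^ (1 - δ) by positivity)
        have h5 : (((Finset.range (n+1)).filter fun k => k.Prime ∧ P k ∧ (k:ℝ) ≤ (n:ℝ) ^ (1 - δ)).card : ℝ) ≤ ⌊(n:ℝ) ^ (1 - δ)⌋₊ + 1 := by
          exact_mod_cast h2
        linarith
      have hc0 : 0 ≤ (1 - δ) * Real.log n := mul_nonneg (by linarith) hlog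
      calc cnt P n * ((1 - δ) * Real.log n)
          = ∑ k ∈ (Finset.range (n + 1)).filter (fun k => k.Prime ∧ P k), ((1 - δ) * Real.log n) := by
            rw [Finset.sum_const, nsmul_eq_mul]; rfl
        _ ≤ ∑ k ∈ (Finset.range (n + 1)).filter (fun k => k.Prime ∧ P k), (Real.log k +
            if (k:ℝ) ≤ (n:ℝ) ^ (1 - δ) then (1 - δ) * Real.log n else 0) := by
            refine Finset.sum_le_sum fun k hk => ?_
            simp only [Finset.mem_filter, Finset.mem_range] at hk
            have hk1 : (1:ℝ) ≤ k := by exact_mod_cast hk.2.1.one_lt.le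
            have hk0 := Real.log_nonneg hk1
            split_ifs with hc
            · linarith
            · have := Real.log_le_log (by positivity) (not_le.1 hc).le
              rw [Real.log_rpow hn0] at this
              linarith
        _ = θ n + (((Finset.range (n+1)).filter fun k => k.Prime ∧ P k ∧ (k:ℝ) ≤ (n:ℝ) ^ (1 - δ)).card : ℝ) * ((1 - δ) * Real.log n) := by
            rw [Finset.sum_add_distrib, ← Finset.sum_filter, Finset.sum_const, nsmul_eq_mul, Finset.filter_filter]
            simp only [and_assoc, hθ]
        _ ≤ _ := by
            have := mul_le_mul_of_nonneg_right hcard hc0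
            linarith
    have hpow : (n:ℝ) ^ (1 - δ) = n * (n:ℝ) ^ (-δ) := by
      rw [sub_eq_add_neg, Real.rpow_add hn0, Real.rpow_one]
    rw [hpow] at key
    have h1δ : 0 < 1 - δ := by linarith
    rw [div_le_iff₀ hn0]
    have e : (θ n / n / (1 - δ) + 2 * ((n:ℝ) ^ (-δ) * Real.log n)) * n =
      (θ n + (2 * (n * (n:ℝ) ^ (-δ))) * ((1 - δ) * Real.log n)) / (1 - δ) := by
      field_simp
    rw [e, le_div_iff₀ h1δ]
    linarith
  have hdec : ∀ δ : ℝ, 0 < δ → Tendsto (fun n : ℕ => (n:ℝ) ^ (-δ) * Real.log n) atTop (𝓝 0) := by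
    intro δ hδ
    have h1 := (isLittleO_log_rpow_atTop hδ).tendsto_div_nhds_zero.comp (tendsto_natCast_atTop_atTop (R := ℝ))
    refine h1.congr fun n => ?_
    simp only [Function.comp]
    rw [Real.rpow_neg (Nat.cast_nonneg n), div_eq_inv_mul]
  rw [tendsto_order]
  constructor
  · intro a ha
    filter_upwards [h.eventually (lt_mem_nhds ha), eventually_ge_atTop 1] with n hn h1
    exact hn.trans_le (hlow n h1)
  · intro a ha
    have hc : Tendsto (fun δ : ℝ => κ / (1 - δ)) (𝓝[>] 0) (𝓝 κ) := by
      have : ContinuousAt (fun δ : ℝ => κ / (1 - δ)) 0 :=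
        ContinuousAt.div (by fun_prop) (by fun_prop) (by simp)
      have h := this.tendsto.mono_left (nhdsWithin_le_nhds (s := Set.Ioi 0))
      simpa using h
    have hsmall : Set.Ioo (0:ℝ) 1 ∈ 𝓝[>] (0:ℝ) := Ioo_mem_nhdsGT one_pos
    obtain ⟨δ, hδ1, hδ2⟩ := ((hc.eventually (gt_mem_nhds ha)).and hsmall).exists
    have hl : Tendsto (fun n : ℕ => θ n / n / (1 - δ) + 2 * ((n:ℝ) ^ (-δ) * Real.log n)) atTop
        (𝓝 (κ / (1 - δ) + 2 * 0)) := (h.div_const _).add ((hdec δ hδ2.1).const_mul 2)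
    rw [mul_zero, add_zero] at hl
    filter_upwards [hl.eventually (gt_mem_nhds hδ1), eventually_ge_atTop 1] with n hn h1
    exact (hup δ hδ2.1 hδ2.2 n h1).trans_lt hn

open Classical ArithmeticFunction in
lemma pnt_classes (q : ℕ) [NeZero q] (U : Finset (ZMod q)) (hU : ∀ a ∈ U, IsUnit a) :
    Tendsto (fun n : ℕ => cnt (fun p => (p : ZMod q) ∈ U) n * Real.log n / n) atTop
      (𝓝 (U.card * (q.totient : ℝ)⁻¹)) := by
  refine theta_to_pi _ _ ?_
  have h1 : Tendsto (fun n : ℕ => ∑ a ∈ U, (∑ k ∈ Finset.Icc 1 n, vonMangoldt.residueClass a k) / n) atTop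
      (𝓝 (∑ a ∈ U, (q.totient : ℝ)⁻¹)) := tendsto_finsetSum _ fun a ha => psi_ap q a (hU a ha)
  rw [Finset.sum_const, nsmul_eq_mul] at h1
  have h2 : ∀ n : ℕ, ∑ a ∈ U, (∑ k ∈ Finset.Icc 1 n, vonMangoldt.residueClass a k) / n =
      (∑ k ∈ Finset.Icc 1 n, if (k : ZMod q) ∈ U then vonMangoldt k else 0) / n := by
    intro n
    rw [← Finset.sum_div, Finset.sum_comm]
    congr 1
    refine Finset.sum_congr rfl fun k _ => ?_
    simp only [vonMangoldt.residueClass, Set.indicator_apply, Set.mem_ofPred_eq]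
    rw [Finset.sum_ite_eq]
  have h3 : ∀ n : ℕ, 1 ≤ n →
      |(∑ k ∈ Finset.Icc 1 n, if (k : ZMod q) ∈ U then vonMangoldt k else 0) / (n:ℝ) -
      (∑ k ∈ (Finset.range (n + 1)).filter fun k : ℕ => k.Prime ∧ (k : ZMod q) ∈ U, Real.log k) / n| ≤
      2 * (Real.log n / (n:ℝ) ^ (1/2 : ℝ)) := by
    intro n hn
    have hn0 : (0:ℝ) < n := by exact_mod_cast hn
    have e : (∑ k ∈ (Finset.range (n + 1)).filter fun k : ℕ => k.Prime ∧ (k : ZMod q) ∈ U, Real.log k) =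
        ∑ k ∈ Finset.Icc 1 n, if k.Prime ∧ (k : ZMod q) ∈ U then Real.log k else 0 := by
      rw [← Finset.sum_filter]
      refine Finset.sum_congr ?_ fun _ _ => rfl
      ext k
      simp only [Finset.mem_filter, Finset.mem_range, Finset.mem_Icc]
      constructor
      · rintro ⟨a, b, c⟩; exact ⟨⟨b.pos, by omega⟩, b, c⟩
      · rintro ⟨a, b, c⟩; exact ⟨by omega, b, c⟩
    have hps := Chebyshev.psi_sub_theta_le (x := n) (by exact_mod_cast hn)
    rw [Chebyshev.psi_sub_theta_eq_sum_not_prime, Nat.floor_natCast, Finset.sum_filter] at hps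
    have hI : Finset.Ioc 0 n = Finset.Icc 1 n := rfl
    rw [hI] at hps
    rw [e, ← sub_div, ← Finset.sum_sub_distrib, abs_div, abs_of_pos hn0, div_le_iff₀ hn0]
    refine (Finset.abs_sum_le_sum_abs _ _).trans (le_trans (Finset.sum_le_sum (g := fun k => if ¬ k.Prime then vonMangoldt k else 0) fun k _ => ?_) (hps.trans (le_of_eq ?_)))
    · by_cases hp : k.Prime
      · by_cases hu : (k : ZMod q) ∈ U <;> simp [hp, hu, vonMangoldt_apply_prime]
      · by_cases hu : (k : ZMod q) ∈ U <;> simp [hp, hu, abs_of_nonneg vonMangoldt_nonneg]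
    · rw [Real.sqrt_eq_rpow]
      have : (n:ℝ) = (n:ℝ) ^ (1/2:ℝ) * (n:ℝ)^(1/2:ℝ) := by
        rw [← Real.rpow_add hn0]; norm_num
      have hp : 0 < (n:ℝ) ^ (1/2:ℝ) := by positivity
      have hd : (n:ℝ) / (n:ℝ) ^ (1/2:ℝ) = (n:ℝ) ^ (1/2:ℝ) := by
        rw [div_eq_iff hp.ne']; exact this
      calc 2 * (n:ℝ) ^ (1/2:ℝ) * Real.log n = 2 * (Real.log n * ((n:ℝ) / (n:ℝ) ^ (1/2:ℝ))) := by
            rw [hd]; ring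
        _ = _ := by ring
  have h4 : Tendsto (fun n : ℕ => 2 * (Real.log n / (n:ℝ) ^ (1/2 : ℝ))) atTop (𝓝 0) := by
    have := ((isLittleO_log_rpow_atTop (r := 1/2) (by norm_num)).tendsto_div_nhds_zero.comp
      (tendsto_natCast_atTop_atTop (R := ℝ))).const_mul 2
    simpa [Function.comp_def] using this
  have h5 : Tendsto (fun n : ℕ => (∑ k ∈ Finset.Icc 1 n, if (k : ZMod q) ∈ U then vonMangoldt k else 0) / (n:ℝ) -
      (∑ k ∈ (Finset.range (n + 1)).filter fun k : ℕ => k.Prime ∧ (k : ZMod q) ∈ U, Real.log k) / n) atTop (𝓝 0) := by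
    refine squeeze_zero_norm' ?_ h4
    filter_upwards [eventually_ge_atTop 1] with n hn using h3 n hn
  have h6 := h1.sub h5
  rw [sub_zero] at h6
  refine h6.congr fun n => ?_
  rw [h2, sub_sub_cancel]
  congr!

end Sub14

end

section
open Filter Topology
open scoped NumberTheorySymbols

namespace Sub14

lemma exists_neg_one (D : ℤ) (hD : ¬ IsSquare D) :
    ∃ n : ℕ, Odd n ∧ D.gcd n = 1 ∧ J(D | n) = -1 := by
  have hD0 : D ≠ 0 := by rintro rfl; exact hD ⟨0, by simp⟩
  -- it is enough to find `n` odd with symbol -1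
  suffices h : ∃ n : ℕ, Odd n ∧ J(D | n) = -1 by
    obtain ⟨n, h1, h2⟩ := h
    refine ⟨n, h1, ?_, h2⟩
    by_contra hg
    have : NeZero n := ⟨by rintro rfl; simp at h1⟩
    have := jacobiSym.eq_zero_iff_not_coprime.2 hg
    omega
  by_cases hp : ∃ p : ℕ, p.Prime ∧ p ≠ 2 ∧ Odd (D.natAbs.factorization p)
  · obtain ⟨p, hpp, hp2, hpo⟩ := hp
    haveI := Fact.mk hpp
    have hpodd : Odd p := hpp.odd_of_ne_two hp2
    set N := D.natAbs with hN
    have hN0 : N ≠ 0 := Int.natAbs_ne_zero.2 hD0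
    -- N = p^f * (2^e * m)
    obtain ⟨f, M, hMp, hNM⟩ := Nat.exists_eq_pow_mul_and_not_dvd hN0 p hpp.ne_one
    have hM0 : M ≠ 0 := by rintro rfl; simp at hMp
    have hff : Odd f := by
      have : N.factorization p = f := by
        rw [hNM, Nat.factorization_mul (pow_ne_zero _ hpp.ne_zero) hM0, hpp.factorization_pow]
        simp [Nat.factorization_eq_zero_of_not_dvd hMp]
      rwa [this] at hpo
    obtain ⟨e, m, hm2, hMm⟩ := Nat.exists_eq_pow_mul_and_not_dvd hM0 2 (by norm_num)
    have hmodd : Odd m := by rwa [← Nat.not_even_iff_odd, even_iff_two_dvd]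
    have hpm : ¬ p ∣ m := fun h => hMp (hMm ▸ h.mul_left _)
    -- nonresidue
    obtain ⟨u, hu⟩ : ∃ u : ZMod p, quadraticChar (ZMod p) u = -1 :=
      quadraticChar_exists_neg_one (by rw [ZMod.ringChar_zmod_n]; exact hp2)
    have hcop : Nat.Coprime (8 * m) p := by
      refine Nat.Coprime.mul_left ?_ ?_
      · exact (Nat.Coprime.pow_left 3 (Nat.coprime_two_left.2 hpodd) : Nat.Coprime (2^3) p)
      · exact ((Nat.Prime.coprime_iff_not_dvd hpp).2 hpm).symm
    obtain ⟨n, hn1, hn2⟩ := Nat.chineseRemainder hcop 1 u.val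
    have hn8 : n % 8 = 1 := by
      have : n ≡ 1 [MOD 8] := hn1.of_mul_right m
      exact this
    have hnm : n ≡ 1 [MOD m] := hn1.of_mul_left 8
    have hnodd : Odd n := by rw [Nat.odd_iff]; omega
    refine ⟨n, hnodd, ?_⟩
    have hJp : J(p | n) = -1 := by
      rw [jacobiSym.quadratic_reciprocity_one_mod_four' hpodd (by omega), ← jacobiSym.legendreSym.to_jacobiSym,
        legendreSym]
      have : ((n : ℤ) : ZMod p) = u := by
        rw [Int.cast_natCast, (ZMod.natCast_eq_natCast_iff _ _ _).2 hn2, ZMod.natCast_val, ZMod.cast_id', id]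
      rw [this, hu]
    have hJ2 : J(2 | n) = 1 := by
      rw [jacobiSym.at_two hnodd, ZMod.χ₈_nat_eq_if_mod_eight, if_neg (by omega), if_pos (by omega)]
    have hJn : J(-1 | n) = 1 := by
      rw [jacobiSym.at_neg_one hnodd, ZMod.χ₄_nat_eq_if_mod_four, if_neg (by omega), if_pos (by omega)]
    have hJm : J(m | n) = 1 := by
      rw [jacobiSym.quadratic_reciprocity_one_mod_four' hmodd (by omega), jacobiSym.mod_left]
      have : ((n : ℤ) % m) = 1 % m := by exact_mod_cast hnm
      rw [this, ← jacobiSym.mod_left, jacobiSym.one_left]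
    have hJN : J(N | n) = -1 := by
      rw [hNM, hMm]
      push_cast
      rw [jacobiSym.mul_left, jacobiSym.mul_left, jacobiSym.pow_left, jacobiSym.pow_left, hJp, hJ2, hJm, hff.neg_one_pow]
      simp
    rcases Int.natAbs_eq D with h | h
    · rw [h]; exact hJN
    · rw [h, ← neg_one_mul, jacobiSym.mul_left, hJn, one_mul]; exact hJN
  · push Not at hp
    set N := D.natAbs with hN
    have hN0 : N ≠ 0 := Int.natAbs_ne_zero.2 hD0
    obtain ⟨e, m, hm2, hNm⟩ := Nat.exists_eq_pow_mul_and_not_dvd hN0 2 (by norm_num)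
    have hmodd : Odd m := by rwa [← Nat.not_even_iff_odd, even_iff_two_dvd]
    have hm0 : m ≠ 0 := by rintro rfl; simp at hm2
    -- m is a square
    obtain ⟨s, hs⟩ : ∃ s, m = s ^ 2 := by
      refine ⟨m.factorization.prod fun p k => p ^ (k / 2), ?_⟩
      conv_lhs => rw [← Nat.prod_factorization_pow_eq_self hm0]
      rw [Finsupp.prod, Finsupp.prod, ← Finset.prod_pow]
      refine Finset.prod_congr rfl fun p hp' => ?_
      rw [← pow_mul]
      congr 1
      have hpp : p.Prime := Nat.prime_of_mem_primeFactors hp'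
      have hpm : p ∣ m := Nat.dvd_of_mem_primeFactors hp'
      have hp2 : p ≠ 2 := by rintro rfl; exact hm2 hpm
      have := hp p hpp hp2
      rw [Nat.not_odd_iff_even] at this
      rw [hNm, Nat.factorization_mul (pow_ne_zero _ two_ne_zero) hm0, Nat.prime_two.factorization_pow] at this
      simp [Finsupp.single_apply, hp2.symm] at this
      obtain ⟨c, hc⟩ := this
      omega
    have hsodd : Odd s := by
      rw [hs] at hmodd
      exact (Nat.odd_pow_iff two_ne_zero).1 hmodd
    have hs0 : s ≠ 0 := by rintro rfl; simp at hsodd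
    rcases Nat.even_or_odd e with he | he
    · -- N = t^2, D = -t^2
      obtain ⟨r, hr⟩ := he
      have hNt : N = (2 ^ r * s) ^ 2 := by rw [hNm, hs, hr]; ring
      have hDt : D = -((2 ^ r * s : ℕ) : ℤ) ^ 2 := by
        rcases Int.natAbs_eq D with h | h
        · exact absurd ⟨((2 ^ r * s : ℕ) : ℤ), by rw [h, ← hN, hNt]; push_cast; ring⟩ hD
        · rw [h, ← hN, hNt]; push_cast; ring
      set t := 2 ^ r * s with ht
      have ht0 : 0 < t := by positivity
      have hnodd : Odd (4 * t - 1) := by rw [Nat.odd_iff]; omega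
      refine ⟨4 * t - 1, hnodd, ?_⟩
      have hcop : ((t : ℕ) : ℤ).gcd ((4 * t - 1 : ℕ) : ℤ) = 1 := by
        rw [Int.gcd_natCast_natCast]
        have h1 : Nat.Coprime t (4 * t - 1) := by
          refine Nat.Coprime.symm (Nat.Coprime.coprime_dvd_right (Dvd.intro_left 4 rfl) ?_)
          have : Nat.Coprime (4 * t - 1) (4 * t - 1 + 1) := by simp
          rwa [Nat.sub_add_cancel (by omega)] at this
        exact h1
      rw [hDt, ← neg_one_mul, jacobiSym.mul_left, jacobiSym.sq_one' hcop, mul_one,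
        jacobiSym.at_neg_one hnodd, ZMod.χ₄_nat_eq_if_mod_four, if_neg (by omega), if_neg (by omega)]
    · obtain ⟨r, hr⟩ := he
      have hs8 : (s ^ 2) % 8 = 1 := by
        have := Nat.odd_iff.1 hsodd
        have h8 : s % 8 = 1 ∨ s % 8 = 3 ∨ s % 8 = 5 ∨ s % 8 = 7 := by omega
        rcases h8 with h | h | h | h <;> rw [Nat.pow_mod, h]
      have hnodd : Odd (s ^ 2 + 4) := by rw [Nat.odd_iff]; omega
      refine ⟨s ^ 2 + 4, hnodd, ?_⟩
      have hJ2 : J(2 | s ^ 2 + 4) = -1 := by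
        rw [jacobiSym.at_two hnodd, ZMod.χ₈_nat_eq_if_mod_eight, if_neg (by omega), if_neg (by omega)]
      have hJn : J(-1 | s ^ 2 + 4) = 1 := by
        rw [jacobiSym.at_neg_one hnodd, ZMod.χ₄_nat_eq_if_mod_four, if_neg (by omega), if_pos (by omega)]
      have hcop : ((s : ℕ) : ℤ).gcd ((s ^ 2 + 4 : ℕ) : ℤ) = 1 := by
        rw [Int.gcd_natCast_natCast]
        have h1 : Nat.Coprime s (s ^ 2 + 4) := by
          have h4 : Nat.Coprime s 4 := (Nat.Coprime.pow_right 2 (Nat.coprime_two_right.2 hsodd) : Nat.Coprime s (2^2))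
          rw [pow_two, add_comm]
          exact (Nat.coprime_add_mul_left_right _ _ _).2 h4
        exact h1
      have hJN : J(N | s ^ 2 + 4) = -1 := by
        rw [hNm, hs]
        push_cast
        rw [jacobiSym.mul_left, jacobiSym.pow_left, jacobiSym.sq_one' hcop, hJ2, hr]
        have : Odd (2 * r + 1) := ⟨r, rfl⟩
        rw [this.neg_one_pow]; simp
      rcases Int.natAbs_eq D with h | h
      · rw [h]; exact hJN
      · rw [h, ← neg_one_mul, jacobiSym.mul_left, hJn, one_mul]; exact hJN

open Classical in
lemma half_classes (D : ℤ) (hD : ¬ IsSquare D) :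
    ∃ (q : ℕ) (_ : NeZero q) (U : Finset (ZMod q)), (∀ a ∈ U, IsUnit a) ∧
      (U.card * (q.totient : ℝ)⁻¹ = 1 / 2) ∧
      ∀ n : ℕ, ((n : ZMod q) ∈ U ↔ Int.gcd n (2 * D) = 1 ∧ J(D | n) = 1) := by
  have hD0 : D ≠ 0 := by rintro rfl; exact hD ⟨0, by simp⟩
  have hq0 : 4 * D.natAbs ≠ 0 := by
    have := Int.natAbs_ne_zero.2 hD0
    omega
  obtain ⟨q, hq⟩ : ∃ q, q = 4 * D.natAbs := ⟨_, rfl⟩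
  haveI hne : NeZero q := ⟨by rw [hq]; exact hq0⟩
  have hodd : ∀ a : ZMod q, IsUnit a → Odd a.val := by
    intro a ha
    have h1 : Nat.Coprime a.val q := by
      have := (ZMod.isUnit_iff_coprime a.val q).1 (by rwa [ZMod.natCast_val, ZMod.cast_id', id])
      exact this
    rw [← Nat.coprime_two_right]
    exact h1.coprime_dvd_right (by rw [hq]; exact ⟨2 * D.natAbs, by ring⟩)
  have hmod : ∀ n : ℕ, Odd n → J(D | (n : ZMod q).val) = J(D | n) := by
    intro n hn
    rw [ZMod.val_natCast, hq, ← jacobiSym.mod_right D hn]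
  have hcop : ∀ n : ℕ, IsUnit (n : ZMod q) ↔ Int.gcd n (2 * D) = 1 := by
    intro n
    rw [ZMod.isUnit_iff_coprime, Int.gcd, Int.natAbs_mul, Int.natAbs_natCast, hq]
    change Nat.Coprime _ _ ↔ Nat.Coprime _ _
    rw [show 4 * D.natAbs = 2 * (2 * D.natAbs) by ring, show (2:ℤ).natAbs = 2 from rfl,
      Nat.coprime_mul_iff_right]
    constructor
    · exact fun h => h.2
    · exact fun h => ⟨h.coprime_dvd_right (Dvd.intro _ rfl), h⟩
  have hmul : ∀ a b : ZMod q, IsUnit a → IsUnit b → J(D | (a * b).val) = J(D | a.val) * J(D | b.val) := by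
    intro a b ha hb
    have ha' := hodd a ha
    have hb' := hodd b hb
    rw [← jacobiSym.mul_right' _ (by rintro h; simp [h] at ha') (by rintro h; simp [h] at hb'), ← hmod _ (ha'.mul hb')]
    congr 2
    push_cast
    simp
  have hpm : ∀ a : ZMod q, IsUnit a → J(D | a.val) = 1 ∨ J(D | a.val) = -1 := by
    intro a ha
    refine jacobiSym.eq_one_or_neg_one ?_
    have h1 := (hcop a.val).1 (by rwa [ZMod.natCast_val, ZMod.cast_id', id])
    rw [Int.gcd_comm]
    exact Nat.Coprime.coprime_dvd_right (by rw [Int.natAbs_mul]; exact Dvd.intro_left _ rfl) h1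
  obtain ⟨n, hn1, hn2, hn3⟩ := exists_neg_one D hD
  have hnu : IsUnit (n : ZMod q) := by
    rw [hcop, Int.gcd, Int.natAbs_mul, Int.natAbs_natCast]
    refine Nat.Coprime.mul_right ?_ ?_
    · exact Nat.coprime_two_right.2 hn1
    · rw [Int.gcd_comm] at hn2; exact hn2
  have hJn : J(D | (n : ZMod q).val) = -1 := by rw [hmod n hn1, hn3]
  let U : Finset (ZMod q) := Finset.univ.filter fun a => IsUnit a ∧ J(D | a.val) = 1
  let V : Finset (ZMod q) := Finset.univ.filter fun a => IsUnit a ∧ J(D | a.val) = -1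
  have hUV : U.card = V.card := by
    refine Finset.card_bijective (fun a => (n : ZMod q) * a) ?_ ?_
    · exact hnu.unit.mulLeft_bijective
    · intro a
      simp only [U, V, Finset.mem_filter, Finset.mem_univ, true_and]
      rw [IsUnit.mul_iff]
      constructor
      · rintro ⟨h1, h2⟩
        refine ⟨⟨hnu, h1⟩, ?_⟩
        rw [hmul _ _ hnu h1, hJn, h2]; norm_num
      · rintro ⟨⟨_, h1⟩, h2⟩
        refine ⟨h1, ?_⟩
        rw [hmul _ _ hnu h1, hJn] at h2
        linarith
  have htot : U.card + V.card = q.totient := by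
    have himg : U ∪ V = Finset.univ.image (Units.val : (ZMod q)ˣ → ZMod q) := by
      ext a
      simp only [U, V, Finset.mem_union, Finset.mem_filter, Finset.mem_univ, true_and, Finset.mem_image]
      constructor
      · rintro (h | h) <;> exact h.1
      · intro h
        change IsUnit a at h
        rcases hpm a h with h' | h'
        · exact Or.inl ⟨h, h'⟩
        · exact Or.inr ⟨h, h'⟩
    rw [← Finset.card_union_of_disjoint, himg, Finset.card_image_of_injective _ Units.val_injective,
      Finset.card_univ, ZMod.card_units_eq_totient q]
    · rw [Finset.disjoint_left]
      intro a ha hb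
      simp only [U, V, Finset.mem_filter] at ha hb
      have := ha.2.2.symm.trans hb.2.2
      norm_num at this
  refine ⟨q, hne, U, fun a ha => ?_, ?_, fun k => ?_⟩
  · simp only [U, Finset.mem_filter] at ha; exact ha.2.1
  · have hpos : 0 < q.totient := Nat.totient_pos.2 (Nat.pos_of_ne_zero hne.out)
    rw [← htot, ← hUV] at hpos ⊢
    have : (0:ℝ) < U.card := by exact_mod_cast (by omega : 0 < U.card)
    push_cast
    field_simp
    norm_num
  · simp only [U, Finset.mem_filter, Finset.mem_univ, true_and]
    constructor
    · rintro ⟨h1, h2⟩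
      have h3 := (hcop k).1 h1
      refine ⟨h3, ?_⟩
      rw [← h2, hmod]
      have h4 : Nat.Coprime k 2 := Nat.Coprime.coprime_dvd_right (by rw [Int.natAbs_mul]; exact Dvd.intro _ rfl) h3
      exact Nat.coprime_two_right.1 h4
    · rintro ⟨h3, h2⟩
      refine ⟨(hcop k).2 h3, ?_⟩
      rw [← h2, hmod]
      have h4 : Nat.Coprime k 2 := Nat.Coprime.coprime_dvd_right (by rw [Int.natAbs_mul]; exact Dvd.intro _ rfl) h3
      exact Nat.coprime_two_right.1 h4

/-- the good primes -/
def good (D : ℤ) (p : ℕ) : Prop := Int.gcd p (2 * D) = 1 ∧ J(D | p) = 1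

lemma cnt_good (D : ℤ) (hD : ¬ IsSquare D) :
    Tendsto (fun n : ℕ => cnt (good D) n * Real.log n / n) atTop (𝓝 (1 / 2)) := by
  obtain ⟨q, hq, U, hU, hc, hiff⟩ := half_classes D hD
  have := pnt_classes q U hU
  rw [hc] at this
  have e : (fun p : ℕ => (p : ZMod q) ∈ U) = good D := by
    ext p; exact hiff p
  rwa [e] at this

lemma cnt_all : Tendsto (fun n : ℕ => cnt (fun _ => True) n * Real.log n / n) atTop (𝓝 1) := by
  have := pnt_classes 1 {1} (by intro a ha; rw [Finset.mem_singleton] at ha; rw [ha]; exact isUnit_one)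
  have e : (fun p : ℕ => (p : ZMod 1) ∈ ({1} : Finset (ZMod 1))) = fun _ => True := by
    ext p; simp; exact Subsingleton.elim _ _
  rw [e] at this
  simpa using this

end Sub14

end

section
open Filter Topology
open scoped NumberTheorySymbols

namespace Sub14

/-- Number of roots modulo n. -/
noncomputable def nr (b c : ℤ) (n : ℕ) : ℕ := Nat.card {r : ZMod n // r ^ 2 + b * r + c = 0}

lemma nr_mul (b c : ℤ) {m n : ℕ} (h : m.Coprime n) : nr b c (m * n) = nr b c m * nr b c n := by
  unfold nr
  rw [← Nat.card_prod]
  let e := ZMod.chineseRemainder h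
  have key : ∀ r : ZMod (m * n), r ^ 2 + b * r + c = 0 ↔
      ((e r).1 ^ 2 + b * (e r).1 + c = 0 ∧ (e r).2 ^ 2 + b * (e r).2 + c = 0) := by
    intro r
    rw [← map_eq_zero_iff e e.injective, Prod.ext_iff]
    simp
  refine Nat.card_congr ((e.toEquiv.subtypeEquiv (q := fun s : ZMod m × ZMod n =>
    (s.1 ^ 2 + b * s.1 + c = 0 ∧ s.2 ^ 2 + b * s.2 + c = 0)) key).trans ?_)
  exact Equiv.subtypeProdEquivProd (p := fun s : ZMod m => s ^ 2 + b * s + c = 0)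
    (q := fun s : ZMod n => s ^ 2 + b * s + c = 0)

lemma nr_prime (b c D : ℤ) (hD : D = b ^ 2 - 4 * c) {p : ℕ} (hp : p.Prime)
    (hg : Int.gcd p (2 * D) = 1) : nr b c p = if J(D | p) = 1 then 2 else 0 := by
  haveI : Fact p.Prime := ⟨hp⟩
  have hcop : IsCoprime (p : ℤ) (2 * D) := Int.isCoprime_iff_gcd_eq_one.2 hg
  have h2 : (2 : ZMod p) ≠ 0 := by
    intro h
    have : ((2 : ℤ) : ZMod p) = 0 := by exact_mod_cast h
    rw [ZMod.intCast_zmod_eq_zero_iff_dvd] at this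
    have := hcop.isUnit_of_dvd' dvd_rfl (this.mul_right D)
    rw [Int.ofNat_isUnit] at this
    exact hp.not_isUnit this
  have hD0 : (D : ZMod p) ≠ 0 := by
    intro h
    rw [ZMod.intCast_zmod_eq_zero_iff_dvd] at h
    have := hcop.isUnit_of_dvd' dvd_rfl (h.mul_left 2)
    rw [Int.ofNat_isUnit] at this
    exact hp.not_isUnit this
  have hDc : (D : ZMod p) = b ^ 2 - 4 * c := by rw [hD]; push_cast; ring
  have key : ∀ r : ZMod p, r ^ 2 + b * r + c = 0 ↔ (2 * r + b) ^ 2 = D := by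
    intro r
    rw [hDc]
    constructor
    · intro h; linear_combination 4 * h
    · intro h
      have h4 : (4 : ZMod p) ≠ 0 := by
        have : (4 : ZMod p) = 2 * 2 := by norm_num
        rw [this]; exact mul_ne_zero h2 h2
      apply mul_left_cancel₀ h4
      linear_combination h
  rw [← jacobiSym.legendreSym.to_jacobiSym]
  unfold nr
  split_ifs with hs <;> rw [legendreSym.eq_one_iff p hD0] at hs
  · obtain ⟨t, ht⟩ := hs
    have ht0 : t ≠ 0 := by rintro rfl; simp at ht; exact hD0 ht
    rw [Nat.card_eq_two_iff]
    refine ⟨⟨(t - b) / 2, ?_⟩, ⟨(-t - b) / 2, ?_⟩, ?_, ?_⟩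
    · rw [key, ht]; field_simp; ring
    · rw [key, ht]; field_simp; ring
    · intro h
      rw [Subtype.mk.injEq] at h
      field_simp at h
      have : 2 * t = 0 := by linear_combination h
      rcases mul_eq_zero.1 this with h | h
      · exact h2 h
      · exact ht0 h
    · ext ⟨r, hr⟩
      simp only [Set.mem_insert_iff, Set.mem_singleton_iff, Set.mem_univ, iff_true, Subtype.mk.injEq]
      rw [key, ht] at hr
      have : (2 * r + b - t) * (2 * r + b + t) = 0 := by linear_combination hr
      rcases mul_eq_zero.1 this with h | h
      · left; field_simp; linear_combination h
      · right; field_simp; linear_combination h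
  · rw [Nat.card_eq_zero]
    left
    constructor
    rintro ⟨r, hr⟩
    rw [key] at hr
    exact hs ⟨2 * r + b, by rw [← hr]; ring⟩

lemma nr_squarefree (b c : ℤ) {n : ℕ} (hn : Squarefree n) :
    nr b c n = ∏ p ∈ n.primeFactors, nr b c p := by
  have h : ∀ s : Finset ℕ, (∀ p ∈ s, p.Prime) → nr b c (∏ p ∈ s, p) = ∏ p ∈ s, nr b c p := by
    intro s
    induction s using Finset.induction_on with
    | empty =>
      intro _
      simp only [Finset.prod_empty]
      unfold nr
      rw [Nat.card_eq_one_iff_unique]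
      exact ⟨⟨fun x y => Subtype.ext (Subsingleton.elim (α := ZMod 1) _ _)⟩,
        ⟨⟨0, Subsingleton.elim (α := ZMod 1) _ _⟩⟩⟩
    | insert p s hps ih =>
      intro hs
      rw [Finset.prod_insert hps, Finset.prod_insert hps, nr_mul, ih]
      · exact fun q hq => hs q (Finset.mem_insert_of_mem hq)
      · refine Nat.Coprime.prod_right fun q hq => ?_
        rw [Nat.coprime_primes (hs p (Finset.mem_insert_self _ _)) (hs q (Finset.mem_insert_of_mem hq))]
        rintro rfl; exact hps hq
  have := h n.primeFactors fun p hp => Nat.prime_of_mem_primeFactors hp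
  rwa [Nat.prod_primeFactors_of_squarefree hn] at this

lemma root_iff (b c D : ℤ) (hD : D = b ^ 2 - 4 * c) {n : ℕ} (hn : Squarefree n) :
    (Int.gcd n (2 * D) = 1 ∧ Nat.card {r : ZMod n // r ^ 2 + b * r + c = 0} = 2 ^ n.primeFactors.card)
      ↔ ∀ p ∈ n.primeFactors, good D p := by
  change (_ ∧ nr b c n = _) ↔ _
  have hgcd : Int.gcd n (2 * D) = 1 ↔ ∀ p ∈ n.primeFactors, Int.gcd p (2 * D) = 1 := by
    have e : ∀ a : ℕ, Int.gcd a (2 * D) = 1 ↔ a.Coprime (2 * D).natAbs := by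
      intro a; rw [Int.gcd_def]; simp [Nat.Coprime]
    simp only [e]
    conv_lhs => rw [← Nat.prod_primeFactors_of_squarefree hn]
    exact Nat.coprime_prod_left_iff
  rw [hgcd, nr_squarefree b c hn]
  constructor
  · rintro ⟨h1, h2⟩ p hp
    refine ⟨h1 p hp, ?_⟩
    by_contra hJ
    have h0 : nr b c p = 0 := by
      rw [nr_prime b c D hD (Nat.prime_of_mem_primeFactors hp) (h1 p hp), if_neg hJ]
    rw [Finset.prod_eq_zero hp h0] at h2
    exact pow_ne_zero _ two_ne_zero h2.symm
  · intro h
    refine ⟨fun p hp => (h p hp).1, ?_⟩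
    rw [← Finset.prod_const]
    refine Finset.prod_congr rfl fun p hp => ?_
    rw [nr_prime b c D hD (Nat.prime_of_mem_primeFactors hp) (h p hp).1, if_pos (h p hp).2]

end Sub14

end

section
open Filter Topology Asymptotics
open scoped Classical

namespace Sub14

/-- squarefree with exactly k prime factors, all satisfying P -/
def sq (P : ℕ → Prop) (k : ℕ) (n : ℕ) : Prop :=
  Squarefree n ∧ n.primeFactors.card = k ∧ ∀ p ∈ n.primeFactors, P p

/-- the finset of such numbers up to x -/
noncomputable def SS (P : ℕ → Prop) (k x : ℕ) : Finset ℕ := (Finset.range (x + 1)).filter (sq P k)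

/-- its cardinality -/
noncomputable def NN (P : ℕ → Prop) (k x : ℕ) : ℝ := ((SS P k x).card : ℝ)

/-- the finset of primes up to x -/
noncomputable def pr (P : ℕ → Prop) (x : ℕ) : Finset ℕ :=
  (Finset.range (x + 1)).filter fun p => p.Prime ∧ P p

/-- pairs -/
noncomputable def TT (P Q : ℕ → Prop) (k x : ℕ) : Finset (ℕ × ℕ) :=
  (Finset.range (x + 1) ×ˢ Finset.range (x + 1)).filter
    fun z => (z.1.Prime ∧ P z.1) ∧ sq Q k z.2 ∧ z.1 * z.2 ≤ x

lemma cnt_eq (P : ℕ → Prop) (x : ℕ) : cnt P x = ((pr P x).card : ℝ) := by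
  unfold cnt pr
  congr!

lemma sq_pos {P : ℕ → Prop} {k n : ℕ} (h : sq P k n) : 0 < n := Nat.pos_of_ne_zero h.1.ne_zero

lemma mem_SS {P : ℕ → Prop} {k x n : ℕ} : n ∈ SS P k x ↔ n ≤ x ∧ sq P k n := by
  simp [SS, Nat.lt_succ_iff]

lemma mem_pr {P : ℕ → Prop} {x n : ℕ} : n ∈ pr P x ↔ n ≤ x ∧ n.Prime ∧ P n := by
  simp [pr, Nat.lt_succ_iff]

lemma mem_TT {P Q : ℕ → Prop} {k x : ℕ} {z : ℕ × ℕ} :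
    z ∈ TT P Q k x ↔ (z.1.Prime ∧ P z.1) ∧ sq Q k z.2 ∧ z.1 * z.2 ≤ x := by
  simp only [TT, Finset.mem_filter, Finset.mem_product, Finset.mem_range, Nat.lt_succ_iff]
  constructor
  · rintro ⟨_, h⟩; exact h
  · intro h
    refine ⟨⟨?_, ?_⟩, h⟩
    · exact (Nat.le_mul_of_pos_right _ (sq_pos h.2.1)).trans h.2.2
    · exact (Nat.le_mul_of_pos_left _ h.1.1.pos).trans h.2.2

lemma TT_snd (P Q : ℕ → Prop) (k x : ℕ) :
    ((TT P Q k x).card : ℝ) = ∑ m ∈ SS Q k x, cnt P (x / m) := by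
  rw [Finset.card_eq_sum_card_fiberwise (f := Prod.snd) (t := SS Q k x)]
  · push_cast
    refine Finset.sum_congr rfl fun m hm => ?_
    rw [mem_SS] at hm
    have hm0 := sq_pos hm.2
    rw [cnt_eq]
    congr 1
    refine Finset.card_nbij' (fun z => z.1) (fun p => (p, m)) ?_ ?_ ?_ ?_
    · rintro ⟨p, m'⟩ h
      simp only [Finset.coe_filter, Set.mem_setOf_eq, mem_TT] at h
      obtain ⟨h, rfl⟩ := h
      simp only [Finset.mem_coe, mem_pr]
      exact ⟨(Nat.le_div_iff_mul_le hm0).2 h.2.2, h.1⟩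
    · intro p h
      simp only [Finset.mem_coe, mem_pr] at h
      simp only [Finset.coe_filter, Set.mem_setOf_eq, mem_TT, and_true]
      exact ⟨h.2, hm.2, (Nat.le_div_iff_mul_le hm0).1 h.1⟩
    · rintro ⟨p, m'⟩ h
      simp only [Finset.coe_filter, Set.mem_setOf_eq, mem_TT] at h
      obtain ⟨h, rfl⟩ := h
      rfl
    · intro p h; rfl
  · intro z hz
    simp only [Finset.mem_coe, mem_TT] at hz
    simp only [Finset.mem_coe, mem_SS]
    exact ⟨(Nat.le_mul_of_pos_left _ hz.1.1.pos).trans hz.2.2, hz.2.1⟩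

lemma TT_fst (P Q : ℕ → Prop) (k x : ℕ) :
    ((TT P Q k x).card : ℝ) = ∑ p ∈ pr P x, NN Q k (x / p) := by
  rw [Finset.card_eq_sum_card_fiberwise (f := Prod.fst) (t := pr P x)]
  · push_cast
    refine Finset.sum_congr rfl fun p hp => ?_
    rw [mem_pr] at hp
    have hp0 := hp.2.1.pos
    rw [NN]
    congr 1
    refine Finset.card_nbij' (fun z => z.2) (fun m => (p, m)) ?_ ?_ ?_ ?_
    · rintro ⟨p', m⟩ h
      simp only [Finset.coe_filter, Set.mem_setOf_eq, mem_TT] at h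
      obtain ⟨h, rfl⟩ := h
      simp only [Finset.mem_coe, mem_SS]
      exact ⟨(Nat.le_div_iff_mul_le hp0).2 (by rw [mul_comm]; exact h.2.2), h.2.1⟩
    · intro m h
      simp only [Finset.mem_coe, mem_SS] at h
      simp only [Finset.coe_filter, Set.mem_setOf_eq, mem_TT, and_true]
      exact ⟨hp.2, h.2, by rw [mul_comm]; exact (Nat.le_div_iff_mul_le hp0).1 h.1⟩
    · rintro ⟨p', m⟩ h
      simp only [Finset.coe_filter, Set.mem_setOf_eq, mem_TT] at h
      obtain ⟨h, rfl⟩ := h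
      rfl
    · intro p h; rfl
  · intro z hz
    simp only [Finset.mem_coe, mem_TT] at hz
    simp only [Finset.mem_coe, mem_pr]
    exact ⟨(Nat.le_mul_of_pos_right _ (sq_pos hz.2.1)).trans hz.2.2, hz.1⟩

lemma card_sigma_SS (P : ℕ → Prop) (k x : ℕ) :
    ((SS P k x).sigma fun n => n.primeFactors).card = k * (SS P k x).card := by
  rw [Finset.card_sigma, Finset.sum_congr rfl (g := fun _ => k)]
  · simp [mul_comm]
  · intro n hn; rw [mem_SS] at hn; exact hn.2.2.1

lemma primeFactors_mul_prime {p m : ℕ} (hp : p.Prime) (hm : m ≠ 0) :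
    (p * m).primeFactors = insert p m.primeFactors := by
  rw [Nat.primeFactors_mul hp.ne_zero hm, hp.primeFactors]; rfl

/-- part of the pairs with p not dividing m -/
lemma card_notdvd (P : ℕ → Prop) (k x : ℕ) :
    ((TT P P k x).filter fun z => ¬ z.1 ∣ z.2).card = (k + 1) * (SS P (k + 1) x).card := by
  rw [← card_sigma_SS]
  refine Finset.card_nbij' (fun z => (⟨z.1 * z.2, z.1⟩ : Σ _ : ℕ, ℕ)) (fun y => (y.2, y.1 / y.2)) ?_ ?_ ?_ ?_
  · rintro ⟨p, m⟩ h
    simp only [Finset.coe_filter, Set.mem_setOf_eq, mem_TT] at h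
    obtain ⟨⟨⟨hp, hP⟩, hm, hx⟩, hd⟩ := h
    have hm0 := hm.1.ne_zero
    have hpf := primeFactors_mul_prime hp hm0
    have hcop : p.Coprime m := (Nat.Prime.coprime_iff_not_dvd hp).2 hd
    simp only [Finset.mem_coe, Finset.mem_sigma, mem_SS]
    refine ⟨⟨hx, ?_, ?_, ?_⟩, ?_⟩
    · exact (Nat.squarefree_mul hcop).2 ⟨hp.prime.squarefree, hm.1⟩
    · rw [hpf, Finset.card_insert_of_notMem (fun h => hd (Nat.dvd_of_mem_primeFactors h)), hm.2.1]
    · rw [hpf]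
      intro q hq
      rcases Finset.mem_insert.1 hq with rfl | hq
      · exact hP
      · exact hm.2.2 q hq
    · rw [hpf]; exact Finset.mem_insert_self _ _
  · rintro ⟨n, p⟩ h
    simp only [Finset.mem_coe, Finset.mem_sigma, mem_SS] at h
    obtain ⟨⟨hx, hn⟩, hpn⟩ := h
    have hp := Nat.prime_of_mem_primeFactors hpn
    obtain ⟨m, rfl⟩ := Nat.dvd_of_mem_primeFactors hpn
    have hm0 : m ≠ 0 := by rintro rfl; exact hn.1.ne_zero (by simp)
    have hpf := primeFactors_mul_prime hp hm0
    have hcop : p.Coprime m := Nat.coprime_of_squarefree_mul hn.1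
    have hd : ¬ p ∣ m := (Nat.Prime.coprime_iff_not_dvd hp).1 hcop
    simp only [Finset.coe_filter, Set.mem_setOf_eq, mem_TT, Nat.mul_div_cancel_left m hp.pos]
    refine ⟨⟨⟨hp, hn.2.2 p hpn⟩, ⟨?_, ?_, ?_⟩, hx⟩, hd⟩
    · exact hn.1.of_mul_right
    · have := hn.2.1
      rw [hpf, Finset.card_insert_of_notMem (fun h => hd (Nat.dvd_of_mem_primeFactors h))] at this
      omega
    · intro q hq
      exact hn.2.2 q (by rw [hpf]; exact Finset.mem_insert_of_mem hq)
  · rintro ⟨p, m⟩ h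
    simp only [Finset.coe_filter, Set.mem_setOf_eq, mem_TT] at h
    simp [Nat.mul_div_cancel_left m h.1.1.1.pos]
  · rintro ⟨n, p⟩ h
    simp only [Finset.mem_coe, Finset.mem_sigma, mem_SS] at h
    simp [Nat.mul_div_cancel' (Nat.dvd_of_mem_primeFactors h.2)]

lemma card_dvd_le (P : ℕ → Prop) (k x : ℕ) :
    ((TT P P k x).filter fun z => z.1 ∣ z.2).card ≤ k * (SS P k x).card := by
  rw [← card_sigma_SS]
  refine Finset.card_le_card_of_injOn (fun z => (⟨z.2, z.1⟩ : Σ _ : ℕ, ℕ)) ?_ ?_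
  · rintro ⟨p, m⟩ h
    simp only [Finset.coe_filter, Set.mem_setOf_eq, mem_TT] at h
    obtain ⟨⟨⟨hp, hP⟩, hm, hx⟩, hd⟩ := h
    simp only [Finset.mem_coe, Finset.mem_sigma, mem_SS]
    exact ⟨⟨(Nat.le_mul_of_pos_left _ hp.pos).trans hx, hm⟩,
      Nat.mem_primeFactors.2 ⟨hp, hd, hm.1.ne_zero⟩⟩
  · rintro ⟨p, m⟩ _ ⟨p', m'⟩ _ h
    simp only [Sigma.mk.injEq, heq_eq_eq] at h
    simp [h.1, h.2]

lemma TT_bounds (P : ℕ → Prop) (k x : ℕ) :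
    (k + 1) * NN P (k + 1) x ≤ ((TT P P k x).card : ℝ) ∧
      ((TT P P k x).card : ℝ) ≤ (k + 1) * NN P (k + 1) x + k * NN P k x := by
  have h1 := card_notdvd P k x
  have h2 := card_dvd_le P k x
  have h3 := Finset.card_filter_add_card_filter_not (s := TT P P k x) (fun z => z.1 ∣ z.2)
  unfold NN
  constructor
  · have : (k + 1) * (SS P (k + 1) x).card ≤ (TT P P k x).card := by omega
    exact_mod_cast this
  · have : (TT P P k x).card ≤ (k + 1) * (SS P (k + 1) x).card + k * (SS P k x).card := by omega
    exact_mod_cast this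

lemma sq_one (P : ℕ → Prop) (n : ℕ) : sq P 1 n ↔ n.Prime ∧ P n := by
  constructor
  · rintro ⟨h1, h2, h3⟩
    obtain ⟨p, hp⟩ := Finset.card_eq_one.1 h2
    have := Nat.prod_primeFactors_of_squarefree h1
    rw [hp, Finset.prod_singleton] at this
    subst this
    have hm : p ∈ p.primeFactors := by rw [hp]; simp
    exact ⟨Nat.prime_of_mem_primeFactors hm, h3 p hm⟩
  · rintro ⟨h1, h2⟩
    refine ⟨h1.prime.squarefree, ?_, ?_⟩
    · rw [h1.primeFactors]; simp
    · rw [h1.primeFactors]; simpa using h2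

lemma NN_one (P : ℕ → Prop) (x : ℕ) : NN P 1 x = cnt P x := by
  rw [cnt_eq, NN]
  congr 2
  ext n
  rw [mem_SS, mem_pr, sq_one]

lemma NN_nonneg (P : ℕ → Prop) (k x : ℕ) : 0 ≤ NN P k x := Nat.cast_nonneg _

lemma NN_le (P : ℕ → Prop) (k x : ℕ) : NN P k x ≤ NN (fun _ => True) k x := by
  unfold NN
  norm_cast
  refine Finset.card_le_card fun n hn => ?_
  rw [mem_SS] at hn ⊢
  exact ⟨hn.1, hn.2.1, hn.2.2.1, fun _ _ => trivial⟩

lemma SS_subset (P : ℕ → Prop) (k x : ℕ) : SS P k x ⊆ SS (fun _ => True) k x := by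
  intro n hn
  rw [mem_SS] at hn ⊢
  exact ⟨hn.1, hn.2.1, hn.2.2.1, fun _ _ => trivial⟩

end Sub14

end

section
open Filter Topology Asymptotics
open scoped Classical

namespace Sub14

/-- count of squarefree numbers with k prime factors -/
noncomputable def gg (k x : ℕ) : ℝ := NN (fun _ => True) k x

lemma gg_nonneg (k x : ℕ) : 0 ≤ gg k x := NN_nonneg _ _ _

lemma glob {F : ℕ → ℝ} (h : ∀ᶠ x in atTop, F x ≤ 0) : ∃ C : ℝ, 0 ≤ C ∧ ∀ x, F x ≤ C := by
  obtain ⟨X, hX⟩ := eventually_atTop.1 h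
  refine ⟨∑ i ∈ Finset.range X, |F i|, Finset.sum_nonneg fun _ _ => abs_nonneg _, fun x => ?_⟩
  by_cases hx : x < X
  · exact (le_abs_self _).trans (Finset.single_le_sum (f := fun i => |F i|)
      (fun _ _ => abs_nonneg _) (Finset.mem_range.2 hx))
  · exact (hX x (not_lt.1 hx)).trans (Finset.sum_nonneg fun _ _ => abs_nonneg _)

/-- regularity -/
def AA (k : ℕ) : Prop := ∃ c : ℝ, 0 < c ∧ ∀ d : ℕ, 1 ≤ d → ∀ᶠ x : ℕ in atTop, c / d * gg k x ≤ gg k (x / d)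

lemma AA_one : AA 1 := by
  refine ⟨1 / 8, by norm_num, fun d hd => ?_⟩
  have h1 := cnt_all.eventually (gt_mem_nhds (show (1 : ℝ) < 2 by norm_num))
  have h2 := cnt_all.eventually (lt_mem_nhds (show (1 / 2 : ℝ) < 1 by norm_num))
  have hdiv : Tendsto (fun x : ℕ => x / d) atTop atTop := Nat.tendsto_div_const_atTop (by omega)
  have h3 := hdiv.eventually h2
  filter_upwards [h1, h3, hdiv.eventually (eventually_ge_atTop 2), eventually_ge_atTop (2 * d)] with x h1 h3 h4 h5
  simp only [gg, NN_one]
  set y := x / d with hy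
  have hyx : y ≤ x := Nat.div_le_self _ _
  have hy2 : (2 : ℝ) ≤ y := by exact_mod_cast h4
  have hyx' : (y : ℝ) ≤ x := by exact_mod_cast hyx
  have hly : 0 < Real.log y := Real.log_pos (by linarith)
  have hlx : 0 < Real.log x := Real.log_pos (by linarith)
  have hll : Real.log y ≤ Real.log x := Real.log_le_log (by linarith) hyx'
  have hd0 : (0 : ℝ) < d := by exact_mod_cast hd
  have hyd : (x : ℝ) ≤ 2 * d * y := by
    have h6 : x < d * y + d := by
      have := Nat.div_add_mod x d
      have := Nat.mod_lt x (show d > 0 by omega)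
      rw [hy]; omega
    have h7 : d ≤ d * y := Nat.le_mul_of_pos_right _ (by omega)
    have : x ≤ 2 * d * y := by nlinarith
    exact_mod_cast this
  rw [div_lt_iff₀ (by linarith)] at h1
  rw [lt_div_iff₀ (by linarith)] at h3
  have hcy : 0 ≤ cnt (fun _ => True) y := by rw [cnt_eq]; positivity
  have h8 : 1 / 2 * (y : ℝ) ≤ cnt (fun _ => True) y * Real.log x :=
    h3.le.trans (mul_le_mul_of_nonneg_left hll hcy)
  refine le_of_mul_le_mul_right ?_ hlx
  calc 1 / 8 / d * cnt (fun _ => True) x * Real.log x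
      = 1 / 8 / d * (cnt (fun _ => True) x * Real.log x) := by ring
    _ ≤ 1 / 8 / d * (2 * x) := by gcongr
    _ ≤ 1 / 8 / d * (2 * (2 * d * y)) := by gcongr
    _ = 1 / 2 * y := by field_simp; norm_num
    _ ≤ _ := h8

lemma sum_primes (M : ℝ) : ∃ z : ℕ, M ≤ ∑ p ∈ pr (fun _ => True) z, 1 / (p : ℝ) := by
  have h := not_summable_one_div_on_primes
  rw [not_summable_iff_tendsto_nat_atTop_of_nonneg] at h
  · obtain ⟨z, hz⟩ := (h.eventually (eventually_ge_atTop M)).exists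
    refine ⟨z, hz.trans ?_⟩
    rw [pr, Finset.sum_filter]
    refine (Finset.sum_le_sum_of_subset_of_nonneg (Finset.range_mono (Nat.le_succ z)) ?_).trans ?_
    · intro i _ _
      exact Set.indicator_nonneg (fun _ _ => by positivity) _
    · refine Finset.sum_le_sum fun i _ => ?_
      rw [Set.indicator_apply]
      simp
  · intro n
    exact Set.indicator_nonneg (fun _ _ => by positivity) _

lemma BB_of_AA (k : ℕ) (h : AA k) : (gg k) =o[atTop] (gg (k + 1)) := by
  obtain ⟨c, hc, hA⟩ := h
  rw [isLittleO_iff]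
  intro ε hε
  obtain ⟨z, hz⟩ := sum_primes (((k + 1) / ε + k) / c)
  have hall : ∀ᶠ x : ℕ in atTop, ∀ p ∈ pr (fun _ => True) z, c / p * gg k x ≤ gg k (x / p) := by
    rw [Filter.eventually_all_finset]
    intro p hp
    exact hA p (mem_pr.1 hp).2.1.one_le
  filter_upwards [hall, eventually_ge_atTop z] with x hx hxz
  have h1 := (TT_bounds (fun _ => True) k x).2
  rw [TT_fst] at h1
  have h2 : ∑ p ∈ pr (fun _ => True) z, c / p * gg k x ≤ ∑ p ∈ pr (fun _ => True) x, NN (fun _ => True) k (x / p) := by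
    refine (Finset.sum_le_sum hx).trans ?_
    refine Finset.sum_le_sum_of_subset_of_nonneg ?_ fun _ _ _ => NN_nonneg _ _ _
    intro p hp
    rw [mem_pr] at hp ⊢
    exact ⟨hp.1.trans hxz, hp.2⟩
  have h3 : ∑ p ∈ pr (fun _ => True) z, c / p * gg k x = c * (∑ p ∈ pr (fun _ => True) z, 1 / (p : ℝ)) * gg k x := by
    rw [Finset.mul_sum, Finset.sum_mul]
    exact Finset.sum_congr rfl fun p _ => by ring
  have h4 : ((k + 1) / ε + k) * gg k x ≤ c * (∑ p ∈ pr (fun _ => True) z, 1 / (p : ℝ)) * gg k x := by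
    refine mul_le_mul_of_nonneg_right ?_ (gg_nonneg _ _)
    rw [div_le_iff₀ hc] at hz
    linarith
  change _ ≤ (k + 1 : ℝ) * gg (k + 1) x + k * gg k x at h1
  have h5 : (k + 1) / ε * gg k x ≤ (k + 1) * gg (k + 1) x := by linarith
  rw [Real.norm_of_nonneg (gg_nonneg _ _), Real.norm_of_nonneg (gg_nonneg _ _)]
  have hk : (0 : ℝ) < k + 1 := by positivity
  rw [div_mul_eq_mul_div, div_le_iff₀ hε] at h5
  refine le_of_mul_le_mul_left ?_ hk
  linarith

lemma AA_succ (k : ℕ) (hB : (gg k) =o[atTop] (gg (k + 1))) : AA (k + 1) := by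
  obtain ⟨c, hc, hA⟩ := AA_one
  refine ⟨c / 2, by positivity, fun d hd => ?_⟩
  have hd0 : (0 : ℝ) < d := by exact_mod_cast hd
  obtain ⟨C, hC, hg⟩ := glob (F := fun x => c / d * gg 1 x - gg 1 (x / d))
    ((hA d hd).mono fun x hx => by linarith)
  have hK : (0 : ℝ) < k + 1 := by positivity
  have hb := (isLittleO_iff.1 hB) (show 0 < c / (2 * d) * (k + 1) / (C + k + 1) by positivity)
  filter_upwards [hb] with x hx
  rw [Real.norm_of_nonneg (gg_nonneg _ _), Real.norm_of_nonneg (gg_nonneg _ _)] at hx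
  have h1 := (TT_bounds (fun _ => True) k (x / d)).2
  have h2 := (TT_bounds (fun _ => True) k x).1
  rw [TT_snd] at h1 h2
  have h3 : ∑ m ∈ SS (fun _ => True) k x, (c / d * cnt (fun _ => True) (x / m) - C) ≤
      ∑ m ∈ SS (fun _ => True) k (x / d), cnt (fun _ => True) (x / d / m) := by
    have hsub : SS (fun _ => True) k (x / d) ⊆ SS (fun _ => True) k x := by
      intro m hm
      rw [mem_SS] at hm ⊢
      exact ⟨hm.1.trans (Nat.div_le_self _ _), hm.2⟩
    rw [Finset.sum_subset hsub]
    · refine Finset.sum_le_sum fun m _ => ?_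
      have := hg (x / m)
      simp only [gg, NN_one] at this
      have e : x / d / m = x / m / d := by
        rw [Nat.div_div_eq_div_mul, mul_comm d m, ← Nat.div_div_eq_div_mul]
      rw [e]
      linarith
    · intro m hm hm'
      rw [mem_SS] at hm hm'
      have : x / d < m := by
        by_contra h
        exact hm' ⟨not_lt.1 h, hm.2⟩
      rw [Nat.div_eq_of_lt this, ← NN_one, NN, Nat.cast_eq_zero, Finset.card_eq_zero]
      ext n
      rw [mem_SS, sq_one]
      simp only [Finset.notMem_empty, iff_false]
      rintro ⟨h, h', -⟩
      have := h'.pos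
      omega
  rw [Finset.sum_sub_distrib, ← Finset.mul_sum, Finset.sum_const, nsmul_eq_mul] at h3
  change _ ≤ (k + 1 : ℝ) * gg (k + 1) (x / d) + k * gg k (x / d) at h1
  change (k + 1 : ℝ) * gg (k + 1) x ≤ _ at h2
  change _ - gg k x * C ≤ _ at h3
  have h4 : gg k (x / d) ≤ gg k x := by
    unfold gg NN
    norm_cast
    refine Finset.card_le_card fun m hm => ?_
    rw [mem_SS] at hm ⊢
    exact ⟨hm.1.trans (Nat.div_le_self _ _), hm.2⟩
  have h5 : c / d * ((k + 1 : ℝ) * gg (k + 1) x) ≤ c / d * ∑ m ∈ SS (fun _ => True) k x, cnt (fun _ => True) (x / m) :=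
    mul_le_mul_of_nonneg_left h2 (by positivity)
  have h6 : (k : ℝ) * gg k (x / d) ≤ k * gg k x := mul_le_mul_of_nonneg_left h4 (by positivity)
  have h7 : (C + k) * gg k x ≤ c / (2 * d) * (k + 1) * gg (k + 1) x := by
    have h8 : (C + k + 1) * gg k x ≤ c / (2 * d) * (k + 1) * gg (k + 1) x := by
      have := mul_le_mul_of_nonneg_left hx (show 0 ≤ C + k + 1 by positivity)
      refine this.trans (le_of_eq ?_)
      field_simp
    nlinarith [gg_nonneg k x]
  refine le_of_mul_le_mul_left ?_ hK
  have h9 : c / d * ((k + 1 : ℝ) * gg (k + 1) x) = 2 * (c / (2 * d) * (k + 1) * gg (k + 1) x) := by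
    field_simp
  have h10 : (k + 1 : ℝ) * (c / 2 / d * gg (k + 1) x) = c / (2 * d) * (k + 1) * gg (k + 1) x := by
    field_simp
  linarith

lemma AA_all (k : ℕ) : AA (k + 1) := by
  induction k with
  | zero => exact AA_one
  | succ k ih => exact AA_succ (k + 1) (BB_of_AA _ ih)

lemma BB (k : ℕ) (hk : 1 ≤ k) : (gg k) =o[atTop] (gg (k + 1)) := by
  obtain ⟨j, rfl⟩ : ∃ j, k = j + 1 := ⟨k - 1, by omega⟩
  exact BB_of_AA _ (AA_all j)

lemma BB1 (k : ℕ) (hk : 1 ≤ k) : (gg 1) =o[atTop] (gg (k + 1)) := by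
  induction k, hk using Nat.le_induction with
  | base => exact BB 1 le_rfl
  | succ k hk ih => exact ih.trans (BB (k + 1) (by omega))

lemma glob_o {u v : ℕ → ℝ} (hv : ∀ x, 0 ≤ v x) (h : u =o[atTop] v) (ε : ℝ) (hε : 0 < ε) :
    ∃ C : ℝ, 0 ≤ C ∧ ∀ x, |u x| ≤ ε * v x + C := by
  obtain ⟨C, hC, h'⟩ := glob (F := fun x => |u x| - ε * v x) (by
    filter_upwards [isLittleO_iff.1 h hε] with x hx
    rw [Real.norm_eq_abs, Real.norm_of_nonneg (hv x)] at hx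
    linarith)
  exact ⟨C, hC, fun x => by have := h' x; linarith⟩

lemma o_of {E T u v : ℕ → ℝ} (hT0 : ∀ x, 0 ≤ T x) (hu0 : ∀ x, 0 ≤ u x) (hT : T =O[atTop] v)
    (hu : u =o[atTop] v)
    (h : ∀ ε : ℝ, 0 < ε → ∃ C : ℝ, 0 ≤ C ∧ ∀ x, |E x| ≤ ε * T x + C * u x) : E =o[atTop] v := by
  obtain ⟨K, hK, hT⟩ := hT.exists_pos
  rw [isLittleO_iff]
  intro δ hδ
  obtain ⟨C, hC, hE⟩ := h (δ / (2 * K)) (by positivity)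
  filter_upwards [hT.bound, isLittleO_iff.1 hu (show 0 < δ / (2 * (C + 1)) by positivity)] with x h1 h2
  rw [Real.norm_of_nonneg (hT0 x)] at h1
  rw [Real.norm_of_nonneg (hu0 x)] at h2
  have h3 := mul_le_mul_of_nonneg_left h1 (show 0 ≤ δ / (2 * K) by positivity)
  have h4 := mul_le_mul_of_nonneg_left h2 (show 0 ≤ C + 1 by positivity)
  have e3 : δ / (2 * K) * (K * ‖v x‖) = δ / 2 * ‖v x‖ := by field_simp
  have e4 : (C + 1) * (δ / (2 * (C + 1)) * ‖v x‖) = δ / 2 * ‖v x‖ := by field_simp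
  rw [Real.norm_eq_abs (E x)]
  have := hE x
  have := hu0 x
  nlinarith

lemma main_step (P : ℕ → Prop) (hP : (fun x => cnt P x - 1 / 2 * cnt (fun _ => True) x) =o[atTop] gg 1)
    (k : ℕ) (hk : 1 ≤ k) :
    (fun x => NN P k x - 1 / 2 ^ k * gg k x) =o[atTop] gg k := by
  induction k, hk using Nat.le_induction with
  | base =>
    simp only [gg, NN_one] at hP ⊢
    simpa using hP
  | succ k hk ih =>
    have hB := BB k hk
    have hB1 := BB1 k hk
    set Tt : ℕ → ℝ := fun x => ((TT (fun _ => True) (fun _ => True) k x).card : ℝ) with hTt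
    set Tm : ℕ → ℝ := fun x => ((TT (fun _ => True) P k x).card : ℝ) with hTm
    set Tp : ℕ → ℝ := fun x => ((TT P P k x).card : ℝ) with hTp
    have hTt0 : ∀ x, 0 ≤ Tt x := fun x => Nat.cast_nonneg _
    have r1 : (fun x => Tt x - (k + 1) * gg (k + 1) x) =o[atTop] gg (k + 1) := by
      refine IsBigO.trans_isLittleO (IsBigO.of_bound k (Eventually.of_forall fun x => ?_)) hB
      have := TT_bounds (fun _ => True) k x
      change (k + 1) * gg (k + 1) x ≤ Tt x ∧ Tt x ≤ (k + 1) * gg (k + 1) x + k * gg k x at this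
      rw [Real.norm_of_nonneg (gg_nonneg _ _), Real.norm_of_nonneg (by linarith)]
      linarith
    have r2 : (fun x => Tp x - (k + 1) * NN P (k + 1) x) =o[atTop] gg (k + 1) := by
      refine IsBigO.trans_isLittleO (IsBigO.of_bound k (Eventually.of_forall fun x => ?_)) hB
      have := TT_bounds P k x
      change (k + 1) * NN P (k + 1) x ≤ Tp x ∧ Tp x ≤ (k + 1) * NN P (k + 1) x + k * NN P k x at this
      rw [Real.norm_of_nonneg (gg_nonneg _ _), Real.norm_of_nonneg (by linarith)]
      have h2 : (k : ℝ) * NN P k x ≤ k * gg k x := mul_le_mul_of_nonneg_left (NN_le P k x) (by positivity)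
      linarith
    have hTO : Tt =O[atTop] gg (k + 1) := by
      have h := r1.isBigO.add ((isBigO_refl (gg (k + 1)) atTop).const_mul_left (k + 1 : ℝ))
      simpa using h
    have r3 : (fun x => Tp x - 1 / 2 * Tm x) =o[atTop] gg (k + 1) := by
      refine o_of hTt0 (gg_nonneg k) hTO hB fun ε hε => ?_
      obtain ⟨C, hC, hE⟩ := glob_o (gg_nonneg 1) hP ε hε
      refine ⟨C, hC, fun x => ?_⟩
      simp only [hTp, hTm, hTt]
      rw [TT_snd, TT_snd, TT_snd, Finset.mul_sum, ← Finset.sum_sub_distrib]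
      calc _ ≤ ∑ m ∈ SS P k x, |cnt P (x / m) - 1 / 2 * cnt (fun _ => True) (x / m)| :=
            Finset.abs_sum_le_sum_abs _ _
        _ ≤ ∑ m ∈ SS (fun _ => True) k x, |cnt P (x / m) - 1 / 2 * cnt (fun _ => True) (x / m)| :=
            Finset.sum_le_sum_of_subset_of_nonneg (SS_subset _ _ _) fun _ _ _ => abs_nonneg _
        _ ≤ ∑ m ∈ SS (fun _ => True) k x, (ε * gg 1 (x / m) + C) :=
            Finset.sum_le_sum fun m _ => hE (x / m)
        _ = _ := by
            rw [Finset.sum_add_distrib, ← Finset.mul_sum, Finset.sum_const, nsmul_eq_mul]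
            simp only [gg, NN_one]
            rw [NN]; ring
    have r4 : (fun x => Tm x - 1 / 2 ^ k * Tt x) =o[atTop] gg (k + 1) := by
      refine o_of hTt0 (gg_nonneg 1) hTO hB1 fun ε hε => ?_
      obtain ⟨C, hC, hE⟩ := glob_o (gg_nonneg k) ih ε hε
      refine ⟨C, hC, fun x => ?_⟩
      simp only [hTm, hTt]
      rw [TT_fst, TT_fst, Finset.mul_sum, ← Finset.sum_sub_distrib]
      calc _ ≤ ∑ p ∈ pr (fun _ => True) x, |NN P k (x / p) - 1 / 2 ^ k * NN (fun _ => True) k (x / p)| :=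
            Finset.abs_sum_le_sum_abs _ _
        _ ≤ ∑ p ∈ pr (fun _ => True) x, (ε * gg k (x / p) + C) :=
            Finset.sum_le_sum fun m _ => hE (x / m)
        _ = _ := by
            rw [Finset.sum_add_distrib, ← Finset.mul_sum, Finset.sum_const, nsmul_eq_mul]
            simp only [gg, NN_one]
            rw [cnt_eq]; ring
    have hK : (k + 1 : ℝ) ≠ 0 := by positivity
    have := ((r3.add (r4.const_mul_left (1 / 2))).add ((r1.const_mul_left (1 / 2 ^ (k + 1))).sub r2)).const_mul_left
      (1 / (k + 1 : ℝ))
    refine this.congr_left fun x => ?_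
    field_simp
    ring

lemma hP_good (D : ℤ) (hD : ¬ IsSquare D) :
    (fun x => cnt (good D) x - 1 / 2 * cnt (fun _ => True) x) =o[atTop] gg 1 := by
  have e : gg 1 = fun x => cnt (fun _ => True) x := by ext x; simp [gg, NN_one]
  rw [e]
  have h1 := cnt_good D hD
  have h2 := cnt_all
  have hO : (fun n : ℕ => (n : ℝ) / Real.log n) =O[atTop] fun x => cnt (fun _ => True) x := by
    refine IsBigO.of_bound 2 ?_
    filter_upwards [h2.eventually (lt_mem_nhds (show (1 / 2 : ℝ) < 1 by norm_num)), eventually_ge_atTop 2] with x hx hx2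
    have hx2' : (2 : ℝ) ≤ x := by exact_mod_cast hx2
    have hlx : 0 < Real.log x := Real.log_pos (by linarith)
    rw [lt_div_iff₀ (by linarith)] at hx
    have hc : 0 ≤ cnt (fun _ => True) x := by rw [cnt_eq]; positivity
    rw [Real.norm_of_nonneg (by positivity), Real.norm_of_nonneg hc, div_le_iff₀ hlx]
    linarith
  refine IsLittleO.trans_isBigO ?_ hO
  have h3 := h1.sub (h2.const_mul (1 / 2))
  rw [show (1 / 2 - 1 / 2 * 1 : ℝ) = 0 by norm_num] at h3
  rw [isLittleO_iff_tendsto']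
  · refine h3.congr fun x => ?_
    rw [div_div_eq_mul_div]; ring
  · filter_upwards [eventually_ge_atTop 2] with x hx2 h0
    have hx2' : (2 : ℝ) ≤ x := by exact_mod_cast hx2
    have hlx : 0 < Real.log x := Real.log_pos (by linarith)
    exfalso
    have : 0 < (x : ℝ) / Real.log x := by positivity
    linarith

end Sub14

end

open Filter Asymptotics
open scoped Classical

theorem stmt_14 (b c : ℤ) (D : ℤ) (hD : D = b ^ 2 - 4 * c) (hDsq : ¬ IsSquare D)
    (k : ℕ) (hk : 1 ≤ k) :
    IsEquivalent atTop
      (fun x : ℕ => (((Finset.range (x + 1)).filter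
          (fun n : ℕ => Squarefree n ∧ n.primeFactors.card = k ∧
            Int.gcd n (2 * D) = 1 ∧
            Nat.card {r : ZMod n // r ^ 2 + b * r + c = 0} = 2 ^ k)).card : ℝ))
      (fun x : ℕ => (1 / 2 ^ k) * (((Finset.range (x + 1)).filter
          (fun n => Squarefree n ∧ n.primeFactors.card = k)).card : ℝ)) := by
  have h := Sub14.main_step (Sub14.good D) (Sub14.hP_good D hDsq) k hk
  have e1 : ∀ x : ℕ, (((Finset.range (x + 1)).filter
          (fun n => Squarefree n ∧ n.primeFactors.card = k)).card : ℝ) = Sub14.gg k x := by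
    intro x
    unfold Sub14.gg Sub14.NN
    congr 2
    ext n
    rw [Sub14.mem_SS, Finset.mem_filter, Finset.mem_range, Nat.lt_succ_iff, Sub14.sq]
    simp
  have e2 : ∀ x : ℕ, (((Finset.range (x + 1)).filter
          (fun n : ℕ => Squarefree n ∧ n.primeFactors.card = k ∧
            Int.gcd n (2 * D) = 1 ∧
            Nat.card {r : ZMod n // r ^ 2 + b * r + c = 0} = 2 ^ k)).card : ℝ)
        = Sub14.NN (Sub14.good D) k x := by
    intro x
    unfold Sub14.NN
    congr 2
    ext n
    rw [Sub14.mem_SS, Finset.mem_filter, Finset.mem_range, Nat.lt_succ_iff, Sub14.sq]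
    refine and_congr_right fun _ => and_congr_right fun hs => and_congr_right fun hc => ?_
    rw [← Sub14.root_iff b c D hD hs, hc]
  simp only [e1, e2]
  rw [IsEquivalent]
  refine IsLittleO.trans_isBigO h (IsBigO.of_bound (2 ^ k) (Eventually.of_forall fun x => ?_))
  rw [norm_mul, Real.norm_of_nonneg (show (0 : ℝ) ≤ 1 / 2 ^ k by positivity), ← mul_assoc,
    mul_one_div_cancel (by positivity), one_mul]
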